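/- arXiv:1407.7684 — 5 statements merged into one kernel-verified Lean document; each statement's English description precedes it below -/
import Mathlib

section
/- Let n ≥ 1. For every vector h ∈ ℂ^n, the following teleportation identity holds in ℂ^n ⊗ ℂ^n ⊗ ℂ^n: h ⊗ ψ̄_n = (1/n) ∑_{k,l=1}^n η_{k,l} ⊗ T_{k,l}(h), where η_{k,l} = (u_k ⊗ v_l)(ψ̄_n) and T_{k,l} = v_l u_{−k}. -/
noncomputable section

open scoped BigOperators

/-- `ψ̄_n = (1/√n) ∑_i e_i ⊗ e_i`, viewed as a function of two indices. -/
def psibar (n : ℕ) : Fin n → Fin n → ℂ :=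
  fun a b => if a = b then (Real.sqrt n : ℂ)⁻¹ else 0

/-- The unitary `u_k` on `ℂ^n`, `u_k e_j = e^{2πi k j/n} e_j`. -/
def uop (n : ℕ) (k : Fin n) (f : Fin n → ℂ) : Fin n → ℂ :=
  fun j => Complex.exp (2 * (Real.pi : ℂ) * Complex.I * (k.val : ℂ) * (j.val : ℂ) / (n : ℂ)) * f j

/-- The unitary `v_l` on `ℂ^n`, `v_l e_j = e_{j+l}` (indices mod `n`). -/
def vop (n : ℕ) (l : Fin n) (f : Fin n → ℂ) : Fin n → ℂ :=
  fun j => f (j - l)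

/-- `T_{k,l} = v_l u_{-k}`, with `u_{-k} = u_{n-k}`. -/
def Tkl (n : ℕ) (k l : Fin n) (f : Fin n → ℂ) : Fin n → ℂ :=
  vop n l (uop n (-k) f)

/-- `η_{k,l} = (u_k ⊗ v_l)(ψ̄_n)`, viewed as a function of two indices. -/
def eta (n : ℕ) (k l : Fin n) : Fin n → Fin n → ℂ :=
  fun a b =>
    Complex.exp (2 * (Real.pi : ℂ) * Complex.I * (k.val : ℂ) * (a.val : ℂ) / (n : ℂ)) *
      psibar n a (b - l)

theorem exp_eq_root_pow (n k j : ℕ) :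
    Complex.exp (2 * (Real.pi : ℂ) * Complex.I * (k : ℂ) * (j : ℂ) / (n : ℂ)) =
      Complex.exp (2 * (Real.pi : ℂ) * Complex.I / (n : ℂ)) ^ (k * j) := by
  rw [← Complex.exp_nat_mul]
  congr 1
  push_cast
  ring

theorem root_pow_neg (n : ℕ) (w : ℂ) (hw : w ^ n = 1) (hw0 : w ≠ 0) (k : Fin n) (m : ℕ) :
    w ^ ((-k).val * m) = ((w ^ m)⁻¹) ^ k.val := by
  have h1 : w ^ (-k).val = w ^ (n - k.val) := by
    rw [Fin.val_neg']
    exact (pow_eq_pow_mod _ hw).symm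
  have h2 : w ^ (n - k.val) * w ^ k.val = 1 := by
    rw [← pow_add, Nat.sub_add_cancel k.isLt.le, hw]
  rw [pow_mul, h1, eq_inv_of_mul_eq_one_left h2, inv_pow, inv_pow, ← pow_mul, ← pow_mul,
    mul_comm]

theorem sum_char (n : ℕ) (hn : n ≠ 0) (w : ℂ) (hw : IsPrimitiveRoot w n) (a m : Fin n) :
    ∑ k : Fin n, w ^ (k.val * a.val) * w ^ ((-k).val * m.val) = if a = m then (n : ℂ) else 0 := by
  have hw0 : w ≠ 0 := hw.ne_zero hn
  have h1 : ∀ k : Fin n, w ^ (k.val * a.val) * w ^ ((-k).val * m.val)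
      = (w ^ a.val * (w ^ m.val)⁻¹) ^ k.val := by
    intro k
    rw [root_pow_neg n w hw.pow_eq_one hw0, mul_pow, mul_comm k.val, pow_mul]
  rw [Finset.sum_congr rfl (fun k _ => h1 k),
    Fin.sum_univ_eq_sum_range (fun i => (w ^ a.val * (w ^ m.val)⁻¹) ^ i) n]
  split_ifs with h
  · subst h
    simp [hw0]
  · have hz : w ^ a.val * (w ^ m.val)⁻¹ ≠ 1 := by
      intro h2
      rw [mul_inv_eq_one₀ (pow_ne_zero _ hw0)] at h2
      exact h (Fin.ext (hw.pow_inj a.isLt m.isLt h2))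
    rw [geom_sum_eq hz, mul_pow, inv_pow, ← pow_mul, ← pow_mul, mul_comm a.val, mul_comm m.val,
      pow_mul, pow_mul, hw.pow_eq_one]
    simp

/-- the teleportation identity
`h ⊗ ψ̄_n = (1/n) ∑_{k,l} η_{k,l} ⊗ T_{k,l}(h)` in `ℂ^n ⊗ ℂ^n ⊗ ℂ^n` (pointwise identity). -/
theorem statement2 (n : ℕ) (hn : 1 ≤ n) (h : Fin n → ℂ) (a b c : Fin n) :
    h a * psibar n b c =
      (n : ℂ)⁻¹ * ∑ k : Fin n, ∑ l : Fin n, eta n k l a b * Tkl n k l h c := by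
  have hn0 : n ≠ 0 := by omega
  haveI : NeZero n := ⟨hn0⟩
  have hnC : (n : ℂ) ≠ 0 := by exact_mod_cast hn0
  have hw := Complex.isPrimitiveRoot_exp n hn0
  have key := sum_char n hn0 _ hw a (c - (b - a))
  have hl : ∀ k : Fin n, ∑ l : Fin n, eta n k l a b * Tkl n k l h c =
      (Complex.exp (2 * (Real.pi : ℂ) * Complex.I / (n : ℂ)) ^ (k.val * a.val) *
        Complex.exp (2 * (Real.pi : ℂ) * Complex.I / (n : ℂ)) ^ ((-k).val * (c - (b - a)).val)) *
        ((Real.sqrt n : ℂ)⁻¹ * h (c - (b - a))) := by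
    intro k
    rw [Finset.sum_eq_single (b - a)]
    · have : a = b - (b - a) := by abel
      simp only [eta, Tkl, vop, uop, psibar, exp_eq_root_pow]
      rw [if_pos this]
      ring
    · intro l _ hl
      have : a ≠ b - l := by
        intro h1
        apply hl
        rw [h1]
        abel
      simp [eta, psibar, this]
    · simp
  rw [Finset.sum_congr rfl (fun k _ => hl k), ← Finset.sum_mul, key]
  by_cases hbc : b = c
  · subst hbc
    have : b - (b - a) = a := by abel
    rw [this]
    simp only [psibar, if_true]
    field_simp
  · have : a ≠ c - (b - a) := by
      intro h1
      apply hbc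
      have h2 : a + (b - a) = c := by
        rw [eq_sub_iff_add_eq] at h1
        exact h1
      rw [← h2]
      abel
    simp [psibar, hbc, this]
end
end

section
/- Let d ≥ 1, 1 ≤ p < ∞ and α, β, δ ∈ ℂ. Define the linear map Ψ_{α,β,δ} : ℂ^{d²} → ℂ^{d²} ⊕ ℂ^{d²} by Ψ_{α,β,δ}(a) = (α a + β (∑_{i,j} a_{i,j}) 𝟙, δ (∑_{i,j} a_{i,j}) 𝟙), where 𝟙 denotes the all-ones vector in ℂ^{d²}. Then the operator norm of Ψ_{α,β,δ} from ℓ_1^{d²} to the ℓ_p-direct sum ℓ_p^{d²} ⊕_p ℓ_p^{d²} (i.e., ℓ_p^{2d²}) equals (|α+β|^p + (d²−1)|β|^p + d²|δ|^p)^{1/p}. -/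
noncomputable section

open scoped BigOperators

/-- The `ℓ_p` norm of a finitely supported complex vector. -/
def lpNorm {ι : Type*} [Fintype ι] (p : ℝ) (x : ι → ℂ) : ℝ :=
  (∑ i, ‖x i‖ ^ p) ^ (1 / p)

/-- The map `Ψ_{α,β,δ} : ℂ^{d²} → ℂ^{d²} ⊕ ℂ^{d²}`,
`Ψ(a) = (α a + β (∑ a) 𝟙, δ (∑ a) 𝟙)`. -/
def Psi (d : ℕ) (α β δ : ℂ) (a : Fin d × Fin d → ℂ) :
    (Fin d × Fin d) ⊕ (Fin d × Fin d) → ℂ :=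
  Sum.elim (fun ij => α * a ij + β * ∑ kl, a kl) (fun _ => δ * ∑ kl, a kl)

theorem psi_single_sum (d : ℕ) (p : ℝ) (α β δ : ℂ) (k : Fin d × Fin d) :
    ∑ i, ‖Psi d α β δ (Pi.single k 1) i‖ ^ p =
      ‖α + β‖ ^ p + ((d : ℝ) ^ 2 - 1) * ‖β‖ ^ p + (d : ℝ) ^ 2 * ‖δ‖ ^ p := by
  have h1 : ∑ kl, (Pi.single k (1 : ℂ) : Fin d × Fin d → ℂ) kl = 1 := by
    simp
  rw [Fintype.sum_sum_type]
  simp only [Psi, Sum.elim_inl, Sum.elim_inr, h1, mul_one]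
  congr 1
  · rw [← Finset.add_sum_erase _ _ (Finset.mem_univ k)]
    congr 1
    · simp
    · have : ∀ x ∈ Finset.univ.erase k,
          ‖α * (Pi.single k (1 : ℂ) : Fin d × Fin d → ℂ) x + β‖ ^ p = ‖β‖ ^ p := by
        intro x hx
        rw [Pi.single_eq_of_ne (Finset.ne_of_mem_erase hx)]
        simp
      rw [Finset.sum_congr rfl this, Finset.sum_const, nsmul_eq_mul,
        Finset.cast_card_erase_of_mem (Finset.mem_univ k)]
      congr 1
      simp [sq]
  · simp [sq]

theorem psi_expand (d : ℕ) (α β δ : ℂ) (a : Fin d × Fin d → ℂ)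
    (i : (Fin d × Fin d) ⊕ (Fin d × Fin d)) :
    Psi d α β δ a i = ∑ k, a k * Psi d α β δ (Pi.single k 1) i := by
  have h1 : ∀ k, ∑ kl, (Pi.single k (1 : ℂ) : Fin d × Fin d → ℂ) kl = 1 := by
    simp
  rcases i with i | i
  · simp only [Psi, Sum.elim_inl, h1, mul_one, mul_add, Finset.sum_add_distrib]
    congr 1
    · simp [Pi.single_apply, mul_comm]
    · rw [← Finset.sum_mul, mul_comm]
  · simp only [Psi, Sum.elim_inr, h1, mul_one]
    rw [← Finset.sum_mul, mul_comm]

theorem psi_bound (d : ℕ) (p : ℝ) (hp1 : 1 ≤ p) (α β δ : ℂ) (a : Fin d × Fin d → ℂ)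
    (hS : 0 < ∑ k, ‖a k‖) (C : ℝ)
    (hC : ∀ k, ∑ i, ‖Psi d α β δ (Pi.single k 1) i‖ ^ p = C) :
    ∑ i, ‖Psi d α β δ a i‖ ^ p ≤ (∑ k, ‖a k‖) ^ p * C := by
  set S := ∑ k, ‖a k‖ with hSdef
  have hw : ∑ k, ‖a k‖ / S = 1 := by
    rw [← Finset.sum_div, ← hSdef, div_self hS.ne']
  have key : ∀ i, ‖Psi d α β δ a i‖ ^ p ≤
      S ^ p * ∑ k, ‖a k‖ / S * ‖Psi d α β δ (Pi.single k 1) i‖ ^ p := by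
    intro i
    have h2 : ‖Psi d α β δ a i‖ ≤
        S * ∑ k, ‖a k‖ / S * ‖Psi d α β δ (Pi.single k 1) i‖ := by
      rw [psi_expand, Finset.mul_sum]
      refine (norm_sum_le _ _).trans (Finset.sum_le_sum fun k _ => ?_)
      rw [norm_mul]
      apply le_of_eq
      field_simp
    have h3 := Real.rpow_arith_mean_le_arith_mean_rpow Finset.univ
      (fun k => ‖a k‖ / S) (fun k => ‖Psi d α β δ (Pi.single k 1) i‖)
      (fun k _ => by positivity) hw (fun k _ => norm_nonneg _) hp1
    calc _ ≤ (S * ∑ k, ‖a k‖ / S * ‖Psi d α β δ (Pi.single k 1) i‖) ^ p :=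
          Real.rpow_le_rpow (norm_nonneg _) h2 (by linarith)
      _ = S ^ p * (∑ k, ‖a k‖ / S * ‖Psi d α β δ (Pi.single k 1) i‖) ^ p :=
          Real.mul_rpow hS.le (Finset.sum_nonneg fun k _ => by positivity)
      _ ≤ _ := mul_le_mul_of_nonneg_left h3 (by positivity)
  refine (Finset.sum_le_sum fun i _ => key i).trans (le_of_eq ?_)
  rw [← Finset.mul_sum, Finset.sum_comm]
  simp only [← Finset.mul_sum, hC]
  rw [← Finset.sum_mul, hw, one_mul]

/-- the operator norm of `Ψ_{α,β,δ} : ℓ_1^{d²} → ℓ_p^{d²} ⊕_p ℓ_p^{d²}`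
equals `(|α+β|^p + (d²−1)|β|^p + d²|δ|^p)^{1/p}`. -/
theorem statement5 (d : ℕ) (hd : 1 ≤ d) (p : ℝ) (hp1 : 1 ≤ p) (α β δ : ℂ) :
    sSup { r : ℝ | ∃ a : Fin d × Fin d → ℂ, a ≠ 0 ∧
        r = lpNorm p (Psi d α β δ a) / lpNorm 1 a } =
      (‖α + β‖ ^ p + ((d : ℝ) ^ 2 - 1) * ‖β‖ ^ p + (d : ℝ) ^ 2 * ‖δ‖ ^ p) ^ (1 / p) := by
  have hC := psi_single_sum d p α β δ
  set C := ‖α + β‖ ^ p + ((d : ℝ) ^ 2 - 1) * ‖β‖ ^ p + (d : ℝ) ^ 2 * ‖δ‖ ^ p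
  let k0 : Fin d × Fin d := (⟨0, hd⟩, ⟨0, hd⟩)
  have hC0 : 0 ≤ C := by
    rw [← hC k0]
    exact Finset.sum_nonneg fun i _ => by positivity
  have hp0 : p ≠ 0 := by linarith
  have hone : ∀ a : Fin d × Fin d → ℂ, lpNorm 1 a = ∑ k, ‖a k‖ := by
    intro a
    simp [lpNorm]
  apply IsGreatest.csSup_eq
  constructor
  · refine ⟨Pi.single k0 1, ?_, ?_⟩
    · intro h
      have := congrFun h k0
      simp at this
    · have : ∑ k, ‖(Pi.single k0 (1 : ℂ) : Fin d × Fin d → ℂ) k‖ = 1 := by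
        simp [Pi.single_apply, apply_ite]
      rw [hone, this, div_one, lpNorm, hC]
  · rintro r ⟨a, ha, rfl⟩
    obtain ⟨k, hk⟩ := Function.ne_iff.mp ha
    have hS : 0 < ∑ k, ‖a k‖ :=
      Finset.sum_pos' (fun _ _ => norm_nonneg _) ⟨k, Finset.mem_univ k, norm_pos_iff.mpr hk⟩
    rw [hone, div_le_iff₀ hS, lpNorm]
    refine (Real.rpow_le_rpow (Finset.sum_nonneg fun i _ => by positivity)
      (psi_bound d p hp1 α β δ a hS C hC) (by positivity)).trans (le_of_eq ?_)
    rw [Real.mul_rpow (by positivity) hC0, one_div, Real.rpow_rpow_inv hS.le hp0, mul_comm]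
end
end

section
/- Let 1 ≤ d ≤ n, 1 ≤ p < ∞ with conjugate exponent p', and λ ∈ [0,1]. Set α = λ d^{1/p'}, β = (1−λ)/(d^{1/p} n), δ = ((1−λ)/(d^{1/p} n))·((n−d)/d)^{1/p}. Define j_1 : M_d(ℂ) → M_d(ℂ) ⊗ ℂ^{d²} by j_1(ρ) = (1/d) ∑_{k,l=1}^d T_{k,l} ρ T_{k,l}* ⊗ e_{k,l}; define θ_λ^{d,p} : M_d(ℂ) → M_d(ℂ) ⊕ M_d(ℂ) by θ_λ^{d,p}(ρ) = (λρ + ((1−λ)/n) tr(ρ) I_d, ((1−λ)/n)((n−d)/d)^{1/p} tr(ρ) I_d); define J̃_p : M_d(ℂ) ⊕ M_d(ℂ) → M_d(ℂ) ⊗ (ℂ^{d²} ⊕ ℂ^{d²}) by J̃_p(ρ_1, ρ_2) = d^{−1/p}(∑_{k,l=1}^d T_{k,l} ρ_1 T_{k,l}* ⊗ e_{k,l;1} + ∑_{k,l=1}^d T_{k,l} ρ_2 T_{k,l}* ⊗ e_{k,l;2}). Then (id_{M_d} ⊗ Ψ_{α,β,δ}) ∘ j_1 = J̃_p ∘ θ_λ^{d,p}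 as linear maps M_d(ℂ) → M_d(ℂ) ⊗ (ℂ^{d²} ⊕ ℂ^{d²}). -/
noncomputable section

open scoped BigOperators
open Matrix

/-- The matrix of the unitary `u_k` on `ℂ^d`, `u_k e_j = e^{2πi k j/d} e_j`. -/
def umat (d : ℕ) (k : Fin d) : Matrix (Fin d) (Fin d) ℂ :=
  Matrix.diagonal fun j =>
    Complex.exp (2 * (Real.pi : ℂ) * Complex.I * (k.val : ℂ) * (j.val : ℂ) / (d : ℂ))

/-- The matrix of the unitary `v_l` on `ℂ^d`, `v_l e_j = e_{j+l}` (indices mod `d`). -/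
def vmat (d : ℕ) (l : Fin d) : Matrix (Fin d) (Fin d) ℂ :=
  fun a b => if a = b + l then 1 else 0

/-- `T_{k,l} = v_l u_{-k}` with `u_{-k} = u_{d-k}`, as a matrix. -/
def Tmat (d : ℕ) (k l : Fin d) : Matrix (Fin d) (Fin d) ℂ :=
  vmat d l * umat d (-k)

/-- `j_1(ρ) = (1/d) ∑_{k,l} T_{k,l} ρ T_{k,l}* ⊗ e_{k,l}`, as the family of coefficients
of the basis vectors `e_{k,l}` of `ℂ^{d²}`. -/
def jone (d : ℕ) (ρ : Matrix (Fin d) (Fin d) ℂ) : Fin d × Fin d → Matrix (Fin d) (Fin d) ℂ :=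
  fun kl => (d : ℂ)⁻¹ • (Tmat d kl.1 kl.2 * ρ * (Tmat d kl.1 kl.2)ᴴ)

/-- `id_{M_d} ⊗ Ψ_{α,β,δ}` acting on `M_d ⊗ ℂ^{d²}`, elements of which are recorded as
families of matrix coefficients of the basis vectors `e_{k,l}` (resp. `e_{k,l;1}, e_{k,l;2}`). -/
def idTensorPsi (d : ℕ) (α β δ : ℂ) (F : Fin d × Fin d → Matrix (Fin d) (Fin d) ℂ) :
    (Fin d × Fin d) ⊕ (Fin d × Fin d) → Matrix (Fin d) (Fin d) ℂ :=
  Sum.elim (fun kl => α • F kl + β • ∑ ij, F ij) (fun _ => δ • ∑ ij, F ij)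

/-- The map `θ_λ^{d,p} : M_d → M_d ⊕ M_d`. -/
def theta (n d : ℕ) (lam p : ℝ) (ρ : Matrix (Fin d) (Fin d) ℂ) :
    Matrix (Fin d) (Fin d) ℂ × Matrix (Fin d) (Fin d) ℂ :=
  ((lam : ℂ) • ρ + (((1 - lam) / n : ℝ) : ℂ) • Matrix.trace ρ • (1 : Matrix (Fin d) (Fin d) ℂ),
   ((((1 - lam) / n) * (((n : ℝ) - d) / d) ^ (1 / p) : ℝ) : ℂ) •
     Matrix.trace ρ • (1 : Matrix (Fin d) (Fin d) ℂ))

/-- `J̃_p : M_d ⊕ M_d → M_d ⊗ (ℂ^{d²} ⊕ ℂ^{d²})`. -/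
def Jtilde (d : ℕ) (p : ℝ) (ρs : Matrix (Fin d) (Fin d) ℂ × Matrix (Fin d) (Fin d) ℂ) :
    (Fin d × Fin d) ⊕ (Fin d × Fin d) → Matrix (Fin d) (Fin d) ℂ :=
  Sum.elim
    (fun kl => (((d : ℝ) ^ (-(1 / p)) : ℝ) : ℂ) • (Tmat d kl.1 kl.2 * ρs.1 * (Tmat d kl.1 kl.2)ᴴ))
    (fun kl => (((d : ℝ) ^ (-(1 / p)) : ℝ) : ℂ) • (Tmat d kl.1 kl.2 * ρs.2 * (Tmat d kl.1 kl.2)ᴴ))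

/-- The phase of `u_k` at `j`. -/
def uphase (d : ℕ) (k j : Fin d) : ℂ :=
  Complex.exp (2 * (Real.pi : ℂ) * Complex.I * (k.val : ℂ) * (j.val : ℂ) / (d : ℂ))

lemma uphase_eq (d : ℕ) (k j : Fin d) :
    uphase d k j = ((Complex.exp (2 * Real.pi * Complex.I / d)) ^ j.val) ^ k.val := by
  unfold uphase
  rw [← Complex.exp_nat_mul, ← Complex.exp_nat_mul]
  congr 1
  ring

lemma uphase_orth (d : ℕ) (hd : 1 ≤ d) (b c : Fin d) :
    ∑ k, uphase d k b * star (uphase d k c) = if b = c then (d : ℂ) else 0 := by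
  have hprim := Complex.isPrimitiveRoot_exp d (by omega)
  set ζ := Complex.exp (2 * Real.pi * Complex.I / d) with hζ
  have hn : ζ * star ζ = 1 := by
    have h1 : ‖ζ‖ = 1 := hprim.norm'_eq_one (by omega)
    have := Complex.mul_conj ζ
    rw [Complex.normSq_eq_norm_sq, h1] at this
    simpa using this
  have hn' : ∀ m : ℕ, ζ ^ m * (star ζ) ^ m = 1 := fun m => by rw [← mul_pow, hn, one_pow]
  have hs : ∑ k, uphase d k b * star (uphase d k c) =
      ∑ k ∈ Finset.range d, (ζ ^ b.val * (star ζ) ^ c.val) ^ k := by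
    rw [Finset.sum_range]
    refine Finset.sum_congr rfl fun k _ => ?_
    rw [uphase_eq, uphase_eq, star_pow, star_pow, mul_pow]
  rw [hs]
  split_ifs with h
  · subst h
    simp only [hn', one_pow]
    simp
  · have hz : ζ ^ b.val * (star ζ) ^ c.val ≠ 1 := by
      intro hz
      apply h
      apply Fin.ext
      apply hprim.pow_inj b.2 c.2
      calc ζ ^ b.val = ζ ^ b.val * (ζ ^ c.val * (star ζ) ^ c.val) := by rw [hn', mul_one]
        _ = (ζ ^ b.val * (star ζ) ^ c.val) * ζ ^ c.val := by ring
        _ = ζ ^ c.val := by rw [hz, one_mul]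
    have hp : ζ ^ d = 1 := hprim.pow_eq_one
    rw [geom_sum_eq hz, mul_pow, ← pow_mul, ← pow_mul, mul_comm b.val, mul_comm c.val, pow_mul,
      pow_mul, ← star_pow ζ d, hp]
    simp

lemma Tmat_apply (d : ℕ) (k l a b : Fin d) :
    Tmat d k l a b = if a = b + l then uphase d (-k) b else 0 := by
  unfold Tmat umat
  rw [Matrix.mul_diagonal]
  simp [vmat, uphase]

lemma sum_conj_apply (d : ℕ) (hd : 1 ≤ d) (ρ : Matrix (Fin d) (Fin d) ℂ) :
    ∑ kl : Fin d × Fin d, Tmat d kl.1 kl.2 * ρ * (Tmat d kl.1 kl.2)ᴴ =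
      (d : ℂ) • Matrix.trace ρ • (1 : Matrix (Fin d) (Fin d) ℂ) := by
  haveI : NeZero d := ⟨by omega⟩
  have horth : ∀ b c : Fin d, ∑ k, uphase d (-k) b * star (uphase d (-k) c) =
      if b = c then (d : ℂ) else 0 := fun b c => by
    rw [← uphase_orth d hd b c]
    exact Equiv.sum_comp (Equiv.neg (Fin d)) (fun k => uphase d k b * star (uphase d k c))
  ext a a'
  rw [Matrix.sum_apply, Fintype.sum_prod_type_right]
  have key : ∀ l : Fin d, ∑ k, (Tmat d k l * ρ * (Tmat d k l)ᴴ) a a' =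
      if a = a' then (d : ℂ) * ρ (a - l) (a - l) else 0 := by
    intro l
    have h1 : ∀ k, (Tmat d k l * ρ * (Tmat d k l)ᴴ) a a' =
        ρ (a - l) (a' - l) * (uphase d (-k) (a - l) * star (uphase d (-k) (a' - l))) := by
      intro k
      simp only [Matrix.mul_apply, Matrix.conjTranspose_apply, Tmat_apply, ← sub_eq_iff_eq_add,
        apply_ite star, star_zero, ite_mul, mul_ite, zero_mul, mul_zero,
        Finset.sum_ite_eq, Finset.mem_univ, if_true]
      ring
    simp only [h1]
    rw [← Finset.mul_sum, horth]
    by_cases h : a = a'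
    · subst h; simp [mul_comm]
    · simp [h]
  simp only [key]
  by_cases h : a = a'
  · subst h
    simp only [if_true, Matrix.smul_apply, Matrix.one_apply_eq, smul_eq_mul, mul_one]
    rw [← Finset.mul_sum, Matrix.trace]
    congr 1
    exact (Equiv.subLeft a).sum_comp (fun b => ρ b b)
  · simp [h]

lemma Tmat_unitary (d : ℕ) (hd : 1 ≤ d) (k l : Fin d) : Tmat d k l * (Tmat d k l)ᴴ = 1 := by
  haveI : NeZero d := ⟨by omega⟩
  have hu : ∀ b, uphase d (-k) b * star (uphase d (-k) b) = 1 := fun b => by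
    have h1 : ‖uphase d (-k) b‖ = 1 := by
      rw [uphase_eq, norm_pow, norm_pow,
        (Complex.isPrimitiveRoot_exp d (by omega)).norm'_eq_one (by omega), one_pow, one_pow]
    have := Complex.mul_conj (uphase d (-k) b)
    rw [Complex.normSq_eq_norm_sq, h1] at this
    simpa using this
  ext a a'
  simp only [Matrix.mul_apply, Matrix.conjTranspose_apply, Tmat_apply, ← sub_eq_iff_eq_add,
    apply_ite star, star_zero, ite_mul, mul_ite, zero_mul, mul_zero,
    Finset.sum_ite_eq, Finset.mem_univ, if_true]
  by_cases h : a = a'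
  · subst h; simpa using hu _
  · simp [h, Ne.symm h]

/-- with `α = λ d^{1/p'}`, `β = (1−λ)/(d^{1/p} n)`,
`δ = ((1−λ)/(d^{1/p} n))·((n−d)/d)^{1/p}` (here `1/p' = 1 − 1/p`), one has
`(id_{M_d} ⊗ Ψ_{α,β,δ}) ∘ j_1 = J̃_p ∘ θ_λ^{d,p}`. -/
theorem statement6 (n d : ℕ) (hd : 1 ≤ d) (hdn : d ≤ n) (p : ℝ) (hp : 1 ≤ p)
    (lam : ℝ) (hl0 : 0 ≤ lam) (hl1 : lam ≤ 1)
    (ρ : Matrix (Fin d) (Fin d) ℂ) :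
    idTensorPsi d
        ((lam * (d : ℝ) ^ (1 - 1 / p) : ℝ) : ℂ)
        ((((1 - lam) / ((d : ℝ) ^ (1 / p) * n)) : ℝ) : ℂ)
        ((((1 - lam) / ((d : ℝ) ^ (1 / p) * n)) * (((n : ℝ) - d) / d) ^ (1 / p) : ℝ) : ℂ)
        (jone d ρ) =
      Jtilde d p (theta n d lam p ρ) := by
  have hd0 : (0 : ℝ) < d := by exact_mod_cast hd
  have hdc : (d : ℂ) ≠ 0 := by exact_mod_cast hd0.ne'
  have hsum : ∑ ij, jone d ρ ij = Matrix.trace ρ • (1 : Matrix (Fin d) (Fin d) ℂ) := by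
    unfold jone
    rw [← Finset.smul_sum, sum_conj_apply d hd, smul_smul, inv_mul_cancel₀ hdc, one_smul]
  have hα : lam * (d : ℝ) ^ (1 - 1 / p) * (d : ℝ)⁻¹ = (d : ℝ) ^ (-(1 / p)) * lam := by
    rw [sub_eq_add_neg, Real.rpow_add hd0, Real.rpow_one]
    field_simp
  have hβ : (1 - lam) / ((d : ℝ) ^ (1 / p) * n) = (d : ℝ) ^ (-(1 / p)) * ((1 - lam) / n) := by
    rw [Real.rpow_neg hd0.le, div_mul_eq_div_div_swap, div_eq_mul_inv _ ((d : ℝ) ^ (1 / p)),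
      mul_comm]
  have hα' : ((lam * (d : ℝ) ^ (1 - 1 / p) : ℝ) : ℂ) * (d : ℂ)⁻¹ =
      (((d : ℝ) ^ (-(1 / p)) : ℝ) : ℂ) * (lam : ℂ) := by
    rw [← Complex.ofReal_mul, ← hα, Complex.ofReal_mul (_ * _), Complex.ofReal_inv, Complex.ofReal_natCast]
  rw [hβ]
  unfold idTensorPsi Jtilde
  rw [hsum]
  congr 1
  · funext kl
    simp only [jone, theta]
    rw [Matrix.mul_add, Matrix.add_mul, smul_add]
    simp only [Matrix.mul_smul, Matrix.smul_mul, Matrix.mul_one, Tmat_unitary d hd]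
    rw [smul_smul, hα', Complex.ofReal_mul, mul_smul, mul_smul]
  · funext kl
    simp only [theta]
    simp only [Matrix.mul_smul, Matrix.smul_mul, Matrix.mul_one, Tmat_unitary d hd]
    rw [smul_smul _ _ (trace ρ • (1 : Matrix (Fin d) (Fin d) ℂ)), ← Complex.ofReal_mul, mul_assoc]
end
end

section
/- Let 1 ≤ d ≤ n and λ ∈ [0,1], and let D_λ : M_n(ℂ) → M_n(ℂ) be the quantum depolarizing channel D_λ(ρ) = λρ + (1−λ)(tr(ρ)/n) I_n. Then C_prod^d(D_λ) = log₂(nd) + (λ + (1−λ)/(nd)) log₂(λ + (1−λ)/(nd)) + (nd−1)((1−λ)/(nd)) log₂((1−λ)/(nd)). -/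
noncomputable section

open scoped BigOperators ComplexOrder
open Matrix

/-- The von Neumann entropy (base 2) `S(ρ) = −tr(ρ log₂ ρ)`, computed via the eigenvalues
(with the convention `0 log 0 = 0`). -/
def entropy2 {ι : Type*} [Fintype ι] [DecidableEq ι] (ρ : Matrix ι ι ℂ) : ℝ :=
  if h : ρ.IsHermitian then -∑ i, h.eigenvalues i * Real.logb 2 (h.eigenvalues i) else 0

/-- The partial trace over the first tensor factor, `(tr ⊗ id)`. -/
def ptrace1 {ι κ : Type*} [Fintype ι] (X : Matrix (ι × κ) (ι × κ) ℂ) : Matrix κ κ ℂ :=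
  fun u v => ∑ a : ι, X (a, u) (a, v)

/-- The partial trace over the second tensor factor, `(id ⊗ tr)`. -/
def ptrace2 {ι κ : Type*} [Fintype κ] (X : Matrix (ι × κ) (ι × κ) ℂ) : Matrix ι ι ℂ :=
  fun a b => ∑ j : κ, X (a, j) (b, j)

/-- `id_d ⊗ N`, applying `N` to each `d × d` block. -/
def idTensor (d : ℕ) {ι κ : Type*}
    (N : Matrix ι ι ℂ → Matrix κ κ ℂ)
    (X : Matrix (Fin d × ι) (Fin d × ι) ℂ) : Matrix (Fin d × κ) (Fin d × κ) ℂ :=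
  fun pq rs => N (fun u v => X (pq.1, u) (rs.1, v)) pq.2 rs.2

/-- The product-state classical capacity with `d`-dimensional entanglement assistance,
`C_prod^d(N) = sup { S(∑ λ_i N((tr_d ⊗ id)(ρ_i))) + ∑ λ_i [S((id ⊗ tr)(ρ_i)) − S((id_d ⊗ N)(ρ_i))] }`,
the supremum running over finite ensembles of states `ρ_i` on `ℂ^d ⊗ ℂ^n`. -/
def Cprod (d : ℕ) {ι κ : Type*} [Fintype ι] [DecidableEq ι] [Fintype κ] [DecidableEq κ]
    (N : Matrix ι ι ℂ → Matrix κ κ ℂ) : ℝ :=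
  sSup { r : ℝ | ∃ (k : ℕ) (w : Fin k → ℝ) (ρ : Fin k → Matrix (Fin d × ι) (Fin d × ι) ℂ),
    (∀ i, 0 ≤ w i) ∧ (∑ i, w i = 1) ∧
    (∀ i, (ρ i).PosSemidef ∧ Matrix.trace (ρ i) = 1) ∧
    r = entropy2 (∑ i, w i • N (ptrace1 (ρ i))) +
        ∑ i, w i * (entropy2 (ptrace2 (ρ i)) - entropy2 (idTensor d N (ρ i))) }

/-- The quantum depolarizing channel `D_λ(ρ) = λρ + (1−λ)(tr(ρ)/n) I_n`. -/
def depol (n : ℕ) (lam : ℝ) (ρ : Matrix (Fin n) (Fin n) ℂ) : Matrix (Fin n) (Fin n) ℂ :=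
  (lam : ℂ) • ρ + (((1 - lam) / n : ℝ) : ℂ) • Matrix.trace ρ • (1 : Matrix (Fin n) (Fin n) ℂ)

/-- The quantum erasure channel `E_λ : M_n → M_{n+1}`,
`E_λ(ρ) = block-diag(λρ, (1−λ)tr(ρ))`. -/
def erasure (n : ℕ) (lam : ℝ) (ρ : Matrix (Fin n) (Fin n) ℂ) :
    Matrix (Fin (n + 1)) (Fin (n + 1)) ℂ :=
  fun a b =>
    if ha : (a : ℕ) < n then
      if hb : (b : ℕ) < n then (lam : ℂ) * ρ ⟨a, ha⟩ ⟨b, hb⟩ else 0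
    else if (b : ℕ) < n then 0 else ((1 - lam : ℝ) : ℂ) * Matrix.trace ρ

lemma scalar_int {κ : Type*} [Fintype κ] (w x : κ → ℝ) (hx : ∀ m, 0 ≤ x m)
    (h0 : ∑ m, w m * x m = 0)
    (hs : ∀ s : ℝ, 0 < s → ∑ m, w m * (x m / (x m + s)) ≤ 0) :
    0 ≤ ∑ m, w m * (x m * Real.log (x m)) := by
  have key : ∀ R : ℝ, 0 < R →
      0 ≤ ∑ m, w m * (x m * (Real.log (x m) - Real.log (x m + R))) := by
    intro R hR
    let h : ℝ → ℝ := fun s => ∑ m, w m * (x m * (Real.log (x m) - Real.log (x m + s)))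
    have hd : ∀ s : ℝ, 0 < s → HasDerivAt h (-∑ m, w m * (x m / (x m + s))) s := by
      intro s hs0
      have : HasDerivAt h (∑ m, w m * (x m * (0 - 1 / (x m + s)))) s := by
        apply HasDerivAt.fun_sum
        intro m _
        have hp : x m + s ≠ 0 := by have := hx m; positivity
        have := ((hasDerivAt_id s).const_add (x m)).log hp
        exact (((hasDerivAt_const s (Real.log (x m))).sub this).const_mul (x m)).const_mul (w m)
      convert this using 1
      rw [← Finset.sum_neg_distrib]
      refine Finset.sum_congr rfl fun m _ => ?_
      ring
    have hc : ContinuousOn h (Set.Ici 0) := by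
      apply continuousOn_finsetSum
      intro m _
      by_cases hm : x m = 0
      · simp only [hm, zero_mul, mul_zero]; exact continuousOn_const
      · have hm' : 0 < x m := lt_of_le_of_ne (hx m) (Ne.symm hm)
        refine ContinuousOn.mul continuousOn_const (ContinuousOn.mul continuousOn_const
          (ContinuousOn.sub continuousOn_const (ContinuousOn.log (by fun_prop) ?_)))
        intro s hs'
        have : (0 : ℝ) ≤ s := hs'
        positivity
    have hmono : MonotoneOn h (Set.Ici 0) := by
      apply monotoneOn_of_deriv_nonneg (convex_Ici 0) hc
      · intro s hs'
        rw [interior_Ici] at hs'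
        exact (hd s hs').differentiableAt.differentiableWithinAt
      · intro s hs'
        rw [interior_Ici] at hs'
        rw [(hd s hs').deriv]
        have := hs s hs'
        linarith
    have := hmono (Set.mem_Ici.2 le_rfl) (Set.mem_Ici.2 hR.le) hR.le
    have h00 : h 0 = 0 := by simp [h]
    rw [h00] at this
    exact this
  have key2 : ∀ R : ℝ, 0 < R →
      0 ≤ ∑ m, w m * (x m * (Real.log (x m) - Real.log (1 + x m * R⁻¹))) := by
    intro R hR
    have h1 := key R hR
    have : ∑ m, w m * (x m * (Real.log (x m) - Real.log (1 + x m * R⁻¹)))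
        = ∑ m, w m * (x m * (Real.log (x m) - Real.log (x m + R)))
          + (∑ m, w m * x m) * Real.log R := by
      rw [Finset.sum_mul, ← Finset.sum_add_distrib]
      refine Finset.sum_congr rfl fun m _ => ?_
      have hxm := hx m
      have : x m + R = (1 + x m * R⁻¹) * R := by field_simp; ring
      rw [this, Real.log_mul (by positivity) hR.ne']
      ring
    rw [this, h0]
    linarith
  have lim : Filter.Tendsto (fun R : ℝ =>
      ∑ m, w m * (x m * (Real.log (x m) - Real.log (1 + x m * R⁻¹)))) Filter.atTop
      (nhds (∑ m, w m * (x m * (Real.log (x m) - Real.log (1 + x m * 0))))) := by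
    apply tendsto_finsetSum
    intro m _
    refine Filter.Tendsto.const_mul _ (Filter.Tendsto.const_mul _ (Filter.Tendsto.const_sub _ ?_))
    refine Filter.Tendsto.log ?_ (by simp)
    exact (tendsto_inv_atTop_zero.const_mul _).const_add _
  have := ge_of_tendsto lim (Filter.eventually_atTop.2 ⟨1, fun R hR => key2 R (by linarith)⟩)
  simpa using this

lemma trace_lower {ι : Type*} [Fintype ι] [DecidableEq ι] (T Z : Matrix ι ι ℂ)
    (hT : T.PosSemidef) (a s : ℝ) (ha : 0 ≤ a) (hs : 0 < s) :
    a * s / (a + s) * (T.trace).re ≤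
      a * (Zᴴ * T * Z).trace.re + s * ((1 - Z) * T * (1 - Z)ᴴ).trace.re := by
  have has : 0 < a + s := by linarith
  obtain ⟨p, hp⟩ : ∃ p, p = s / (a + s) := ⟨_, rfl⟩
  obtain ⟨q, hq⟩ : ∃ q, q = a / (a + s) := ⟨_, rfl⟩
  have e1 := (Complex.nonneg_iff.1
    (hT.conjTranspose_mul_mul_same (Z - (p : ℂ) • (1 : Matrix ι ι ℂ))).trace_nonneg).1
  have e2 := (Complex.nonneg_iff.1
    (hT.mul_mul_conjTranspose_same ((1 - Z) - (q : ℂ) • (1 : Matrix ι ι ℂ))).trace_nonneg).1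
  have hre : (Zᴴ * T).trace.re = (T * Z).trace.re := by
    have : (Zᴴ * T) = (T * Z)ᴴ := by rw [conjTranspose_mul, hT.1.eq]
    rw [this, trace_conjTranspose]; simp
  have hre2 : (T * Zᴴ).trace.re = (T * Z).trace.re := by rw [trace_mul_comm, hre]
  have hre3 : (Z * T).trace.re = (T * Z).trace.re := by rw [trace_mul_comm]
  have c1 : ((Z - (p : ℂ) • (1 : Matrix ι ι ℂ))ᴴ * T * (Z - (p : ℂ) • (1 : Matrix ι ι ℂ))).trace.re
      = (Zᴴ * T * Z).trace.re - 2 * p * (T * Z).trace.re + p ^ 2 * T.trace.re := by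
    simp only [conjTranspose_sub, conjTranspose_smul, conjTranspose_one, sub_mul, mul_sub,
      smul_mul_assoc, mul_smul_comm, one_mul, mul_one, trace_sub, trace_smul, Complex.sub_re,
      smul_eq_mul, Complex.star_def, Complex.conj_ofReal, Complex.re_ofReal_mul, hre]
    ring
  have c2 : (((1 - Z) - (q : ℂ) • (1 : Matrix ι ι ℂ)) * T *
        ((1 - Z) - (q : ℂ) • (1 : Matrix ι ι ℂ))ᴴ).trace.re
      = ((1 - Z) * T * (1 - Z)ᴴ).trace.re - 2 * q * (T.trace.re - (T * Z).trace.re)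
        + q ^ 2 * T.trace.re := by
    simp only [conjTranspose_sub, conjTranspose_smul, conjTranspose_one, sub_mul, mul_sub,
      smul_mul_assoc, mul_smul_comm, one_mul, mul_one, trace_sub, trace_smul, Complex.sub_re,
      smul_eq_mul, Complex.star_def, Complex.conj_ofReal, Complex.re_ofReal_mul, hre2, hre3]
    ring
  rw [c1] at e1
  rw [c2] at e2
  have f1 := mul_nonneg ha e1
  have f2 := mul_nonneg hs.le e2
  have hpq : a * p = a * s / (a + s) := by rw [hp]; ring
  have hpq2 : s * q = a * s / (a + s) := by rw [hq]; ring
  have hsum : p + q = 1 := by rw [hp, hq]; field_simp; ring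
  rw [← hpq]
  have hsq : s * q = a * p := by rw [hpq, hpq2]
  have hq' : q = 1 - p := by linarith
  have g : a * p ^ 2 + s * q ^ 2 = a * p := by
    have : s * q ^ 2 = a * p * q := by rw [← hsq]; ring
    rw [this, hq']; ring
  have g2 : (a * p ^ 2 + s * q ^ 2) * T.trace.re = a * p * T.trace.re := by rw [g]
  have g3 : s * q * (T.trace.re - (T * Z).trace.re) = a * p * (T.trace.re - (T * Z).trace.re) := by
    rw [hsq]
  nlinarith

lemma trA {ι : Type*} [Fintype ι] [DecidableEq ι] (z : Matrix ι ι ℂ) (s : ι → ℝ) :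
    (zᴴ * diagonal (fun i => (s i : ℂ)) * z).trace.re
      = ∑ i, ∑ j, s i * Complex.normSq (z i j) := by
  rw [Finset.sum_comm]
  simp only [trace, diag_apply, Complex.re_sum]
  refine Finset.sum_congr rfl fun j _ => ?_
  rw [mul_apply]
  simp only [mul_diagonal, conjTranspose_apply, Complex.re_sum]
  refine Finset.sum_congr rfl fun i _ => ?_
  have : star (z i j) * (s i : ℂ) * z i j = ((s i * Complex.normSq (z i j) : ℝ) : ℂ) := by
    push_cast
    rw [Complex.normSq_eq_conj_mul_self]; simp; ring
  rw [this, Complex.ofReal_re]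

lemma trB {ι : Type*} [Fintype ι] [DecidableEq ι] (Y : Matrix ι ι ℂ) (t : ι → ℝ) :
    (Y * diagonal (fun i => (t i : ℂ)) * Yᴴ).trace.re
      = ∑ i, ∑ j, t j * Complex.normSq (Y i j) := by
  have := trA Yᴴ t
  rw [conjTranspose_conjTranspose] at this
  rw [this, Finset.sum_comm]
  simp

lemma relent {ι : Type*} [Fintype ι] [DecidableEq ι] (T1 T2 U : Matrix ι ι ℂ)
    (h1 : T1.PosSemidef) (h2 : T2.PosSemidef) (a b : ℝ) (ha : 0 ≤ a) (hb : 0 ≤ b)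
    (t s : ι → ℝ) (hτ : T1 + T2 = diagonal (fun j => (t j : ℂ)))
    (hU : Uᴴ * U = 1) (hU' : U * Uᴴ = 1)
    (hσ : (a : ℂ) • T1 + (b : ℂ) • T2 = U * diagonal (fun i => (s i : ℂ)) * Uᴴ) :
    ∑ i, s i * Real.log (s i) -
      ∑ j, (((a : ℂ) • T1 + (b : ℂ) • T2) j j).re * Real.log (t j)
    ≤ T1.trace.re * (a * Real.log a) + T2.trace.re * (b * Real.log b) := by
  obtain ⟨σ, hσd⟩ : ∃ σ, σ = (a : ℂ) • T1 + (b : ℂ) • T2 := ⟨_, rfl⟩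
  rw [← hσd] at hσ ⊢
  have hσp : σ.PosSemidef := by
    rw [hσd]
    exact (h1.smul (by exact_mod_cast ha)).add (h2.smul (by exact_mod_cast hb))
  have hdiag : Uᴴ * σ * U = diagonal (fun i => (s i : ℂ)) := by
    rw [hσ]
    simp only [Matrix.mul_assoc, hU, Matrix.mul_one]
    rw [← Matrix.mul_assoc, hU, Matrix.one_mul]
  have hs : ∀ i, 0 ≤ s i := by
    intro i
    have := (hσp.conjTranspose_mul_mul_same U).diag_nonneg (i := i)
    rw [hdiag] at this
    simpa using this
  have ht : ∀ i, 0 ≤ t i := by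
    intro i
    have := (h1.add h2).diag_nonneg (i := i)
    rw [hτ] at this
    simpa using this
  -- diagonal entries
  have hdσ : ∀ j, (σ j j).re = ∑ i, s i * Complex.normSq (U j i) := by
    intro j
    rw [hσ, mul_apply]
    simp only [mul_diagonal, conjTranspose_apply, Complex.re_sum]
    refine Finset.sum_congr rfl fun i _ => ?_
    have : U j i * (s i : ℂ) * star (U j i) = ((s i * Complex.normSq (U j i) : ℝ) : ℂ) := by
      push_cast
      rw [Complex.normSq_eq_conj_mul_self]; simp; ring
    rw [this, Complex.ofReal_re]
  have hcol : ∀ i, ∑ j, Complex.normSq (U j i) = 1 := by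
    intro i
    have := congrArg (fun M : Matrix ι ι ℂ => (M i i).re) hU
    simp only [mul_apply, conjTranspose_apply, Complex.re_sum, one_apply_eq, Complex.one_re] at this
    rw [← this]
    refine Finset.sum_congr rfl fun j _ => ?_
    rw [Complex.star_def, ← Complex.normSq_eq_conj_mul_self, Complex.ofReal_re]
  have hzero : ∀ i j, t j = 0 → s i * Complex.normSq (U j i) = 0 := by
    intro i j htj
    have hsum : T1 j j + T2 j j = 0 := by
      have := congrArg (fun M : Matrix ι ι ℂ => M j j) hτ
      simpa [htj] using this
    have n1 := (Complex.nonneg_iff.1 (h1.diag_nonneg (i := j)))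
    have n2 := (Complex.nonneg_iff.1 (h2.diag_nonneg (i := j)))
    have hsr := congrArg Complex.re hsum
    simp only [Complex.add_re, Complex.zero_re] at hsr
    have z1 : (T1 j j).re = 0 := by linarith [n1.1, n2.1]
    have z2 : (T2 j j).re = 0 := by linarith [n1.1, n2.1]
    have hz : (σ j j).re = 0 := by
      rw [hσd]; simp [z1, z2]
    rw [hdσ j, Finset.sum_eq_zero_iff_of_nonneg
      (fun i _ => mul_nonneg (hs i) (Complex.normSq_nonneg _))] at hz
    exact hz i (Finset.mem_univ i)
  let w : (ι × ι) ⊕ Bool → ℝ :=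
    Sum.elim (fun m => -(Complex.normSq (U m.2 m.1) * t m.2))
      (fun c => cond c T1.trace.re T2.trace.re)
  let x : (ι × ι) ⊕ Bool → ℝ := Sum.elim (fun m => s m.1 / t m.2) (fun c => cond c a b)
  have hx : ∀ m, 0 ≤ x m := by
    rintro (m | c)
    · exact div_nonneg (hs _) (ht _)
    · cases c
      · exact hb
      · exact ha
  have htr : T1.trace.re * a + T2.trace.re * b = ∑ i, s i := by
    have e1 : σ.trace = ∑ i, (s i : ℂ) := by
      rw [hσ, trace_mul_comm, ← Matrix.mul_assoc, hU, Matrix.one_mul, trace_diagonal]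
    have e2 := congrArg Complex.re e1
    rw [hσd] at e2
    simp at e2
    linarith
  have h0 : ∑ m, w m * x m = 0 := by
    simp only [Fintype.sum_sum_type, w, x, Sum.elim_inl, Sum.elim_inr, Fintype.sum_bool, cond,
      Fintype.sum_prod_type]
    have : ∀ i, ∑ j, -(Complex.normSq (U j i) * t j) * (s i / t j) = - s i := by
      intro i
      have : ∀ j, -(Complex.normSq (U j i) * t j) * (s i / t j)
          = (-s i) * Complex.normSq (U j i) := by
        intro j
        by_cases htj : t j = 0
        · have := hzero i j htj
          rw [htj]; simp only [mul_zero, neg_zero, zero_mul]; linarith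
        · field_simp
      simp_rw [this]
      rw [← Finset.mul_sum, hcol i, mul_one]
    simp_rw [this]
    rw [Finset.sum_neg_distrib, ← htr]; ring
  have hpt : ∀ r : ℝ, 0 < r → ∑ m, w m * (x m / (x m + r)) ≤ 0 := by
    intro r hr
    simp only [Fintype.sum_sum_type, w, x, Sum.elim_inl, Sum.elim_inr, Fintype.sum_bool, cond,
      Fintype.sum_prod_type]
    let z : Matrix ι ι ℂ := fun i j => ((r * t j / (s i + r * t j) : ℝ) : ℂ) * Uᴴ i j
    let Z := U * z
    have l1 := trace_lower T1 Z h1 a r ha hr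
    have l2 := trace_lower T2 Z h2 b r hb hr
    have m1 : a * (Zᴴ * T1 * Z).trace.re + b * (Zᴴ * T2 * Z).trace.re
        = ∑ i, ∑ j, s i * Complex.normSq (z i j) := by
      rw [← trA, ← hdiag]
      have : zᴴ * (Uᴴ * σ * U) * z = Zᴴ * σ * Z := by
        simp only [Z, conjTranspose_mul, Matrix.mul_assoc]
      rw [this, hσd]
      simp [mul_add, add_mul]
    have m2 : ((1 - Z) * T1 * (1 - Z)ᴴ).trace.re + ((1 - Z) * T2 * (1 - Z)ᴴ).trace.re
        = ∑ i, ∑ j, t j * Complex.normSq ((Uᴴ - z) i j) := by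
      rw [← trB, ← hτ]
      have hZ : 1 - Z = U * (Uᴴ - z) := by rw [mul_sub, hU']
      have : (1 - Z) * (T1 + T2) * (1 - Z)ᴴ
          = U * ((Uᴴ - z) * (T1 + T2) * (Uᴴ - z)ᴴ * Uᴴ) := by
        rw [hZ, conjTranspose_mul]; simp only [Matrix.mul_assoc]
      have h3 : ((1 - Z) * (T1 + T2) * (1 - Z)ᴴ).trace
          = ((Uᴴ - z) * (T1 + T2) * (Uᴴ - z)ᴴ).trace := by
        rw [this, trace_mul_comm, Matrix.mul_assoc, hU, Matrix.mul_one]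
      rw [← h3, mul_add, add_mul, trace_add, Complex.add_re]
    have m3 : ∀ i j, s i * Complex.normSq (z i j) + r * (t j * Complex.normSq ((Uᴴ - z) i j))
        = r * (Complex.normSq (U j i) * t j * (s i / t j / (s i / t j + r))) := by
      intro i j
      have hs' := hs i
      have ht' := ht j
      have q1 : Complex.normSq (z i j)
          = (r * t j / (s i + r * t j)) ^ 2 * Complex.normSq (U j i) := by
        simp only [z, Complex.normSq_mul, Complex.normSq_ofReal, conjTranspose_apply,
          Complex.star_def, Complex.normSq_conj]
        ring
      have q2 : Complex.normSq ((Uᴴ - z) i j)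
          = (1 - r * t j / (s i + r * t j)) ^ 2 * Complex.normSq (U j i) := by
        have : (Uᴴ - z) i j = ((1 - r * t j / (s i + r * t j) : ℝ) : ℂ) * Uᴴ i j := by
          rw [Matrix.sub_apply]; simp only [z]; push_cast; ring
        rw [this, Complex.normSq_mul, Complex.normSq_ofReal, conjTranspose_apply,
          Complex.star_def, Complex.normSq_conj]
        ring
      rw [q1, q2]
      rcases eq_or_lt_of_le ht' with h | h
      · simp [← h]
      · have : s i + r * t j ≠ 0 := by positivity
        have h5 : s i / t j + r = (s i + r * t j) / t j := by field_simp
        rw [h5]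
        field_simp
        ring
    have m4 : ∑ i, ∑ j, s i * Complex.normSq (z i j)
        + r * ∑ i, ∑ j, t j * Complex.normSq ((Uᴴ - z) i j)
        = r * ∑ i, ∑ j, Complex.normSq (U j i) * t j * (s i / t j / (s i / t j + r)) := by
      simp only [Finset.mul_sum]
      rw [← Finset.sum_add_distrib]
      refine Finset.sum_congr rfl fun i _ => ?_
      rw [← Finset.sum_add_distrib]
      exact Finset.sum_congr rfl fun j _ => m3 i j
    have m5 : r * (T1.trace.re * (a / (a + r)) + T2.trace.re * (b / (b + r)))
        ≤ r * ∑ i, ∑ j, Complex.normSq (U j i) * t j * (s i / t j / (s i / t j + r)) := by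
      rw [← m4, ← m1, ← m2]
      have r1 : r * (T1.trace.re * (a / (a + r)) + T2.trace.re * (b / (b + r)))
        = a * r / (a + r) * T1.trace.re + b * r / (b + r) * T2.trace.re := by ring
      rw [r1]
      linarith
    have m6 := le_of_mul_le_mul_left m5 hr
    simp only [neg_mul, Finset.sum_neg_distrib]
    linarith
  have fin := scalar_int w x hx h0 hpt
  simp only [Fintype.sum_sum_type, w, x, Sum.elim_inl, Sum.elim_inr, Fintype.sum_bool, cond,
      Fintype.sum_prod_type] at fin
  have last : ∑ i, ∑ j, -(Complex.normSq (U j i) * t j) * (s i / t j * Real.log (s i / t j))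
      = -(∑ i, s i * Real.log (s i) - ∑ j, (σ j j).re * Real.log (t j)) := by
    have e1 : ∑ j, (σ j j).re * Real.log (t j)
        = ∑ i, ∑ j, s i * Complex.normSq (U j i) * Real.log (t j) := by
      rw [Finset.sum_comm]
      refine Finset.sum_congr rfl fun j _ => ?_
      rw [hdσ j, Finset.sum_mul]
    have e2 : ∑ i, s i * Real.log (s i)
        = ∑ i, ∑ j, s i * Complex.normSq (U j i) * Real.log (s i) := by
      refine Finset.sum_congr rfl fun i _ => ?_
      rw [← Finset.sum_mul, ← Finset.mul_sum, hcol i, mul_one]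
    rw [e1, e2, ← Finset.sum_sub_distrib, ← Finset.sum_neg_distrib]
    refine Finset.sum_congr rfl fun i _ => ?_
    rw [← Finset.sum_sub_distrib, ← Finset.sum_neg_distrib]
    refine Finset.sum_congr rfl fun j _ => ?_
    by_cases htj : t j = 0
    · rw [hzero i j htj, htj]; simp
    · by_cases hsi : s i = 0
      · simp [hsi]
      · rw [Real.log_div hsi htj]
        field_simp
  rw [last] at fin
  linarith

open scoped Kronecker

lemma exists_diag {ι : Type*} [Fintype ι] [DecidableEq ι] {A : Matrix ι ι ℂ}
    (hA : A.IsHermitian) : ∃ U : Matrix ι ι ℂ, Uᴴ * U = 1 ∧ U * Uᴴ = 1 ∧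
      A = U * diagonal (fun i => (hA.eigenvalues i : ℂ)) * Uᴴ := by
  refine ⟨hA.eigenvectorUnitary, ?_, ?_, ?_⟩
  · exact Unitary.coe_star_mul_self hA.eigenvectorUnitary
  · exact Unitary.coe_mul_star_self hA.eigenvectorUnitary
  · exact hA.spectral_theorem

lemma entropy2_eq {ι : Type*} [Fintype ι] [DecidableEq ι] {A : Matrix ι ι ℂ}
    (hA : A.IsHermitian) : entropy2 A =
      -(∑ i, hA.eigenvalues i * Real.log (hA.eigenvalues i)) / Real.log 2 := by
  unfold entropy2
  rw [dif_pos hA, neg_div, Finset.sum_div]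
  simp only [Real.logb, mul_div_assoc]

lemma entropy2_conj {ι : Type*} [Fintype ι] [DecidableEq ι] {A V : Matrix ι ι ℂ}
    (hA : A.IsHermitian) (hV : V * Vᴴ = 1) : entropy2 (Vᴴ * A * V) = entropy2 A := by
  have hB : (Vᴴ * A * V).IsHermitian := isHermitian_conjTranspose_mul_mul V hA
  have hc : (Vᴴ * A * V).charpoly = A.charpoly := by
    rw [charpoly_mul_comm, ← Matrix.mul_assoc, hV, Matrix.one_mul]
  have := (hB.eigenvalues_eq_eigenvalues_iff hA).2 hc
  rw [entropy2_eq hA, entropy2_eq hB, this]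

lemma entropy2_diag {ι : Type*} [Fintype ι] [DecidableEq ι] (t : ι → ℝ) :
    entropy2 (diagonal (fun i => (t i : ℂ))) = -(∑ i, t i * Real.log (t i)) / Real.log 2 := by
  have hA : (diagonal (fun i => (t i : ℂ))).IsHermitian := by
    apply isHermitian_diagonal_of_self_adjoint
    ext i; simp
  rw [entropy2_eq hA]
  have h := hA.roots_charpoly_eq_eigenvalues
  rw [charpoly_diagonal, Polynomial.roots_prod _ _
    (by simp [Finset.prod_ne_zero_iff, Polynomial.X_sub_C_ne_zero])] at h
  have h2 := congrArg (fun m : Multiset ℂ => (m.map (fun z => z.re * Real.log z.re)).sum) h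
  simp at h2
  have h3 : ∑ i, t i * Real.log (t i) = ∑ i, hA.eigenvalues i * Real.log (hA.eigenvalues i) := h2
  rw [h3]

lemma entropy2_le {ι : Type*} [Fintype ι] [DecidableEq ι] {A : Matrix ι ι ℂ}
    (hA : A.PosSemidef) (htr : A.trace = 1) :
    entropy2 A ≤ Real.logb 2 (Fintype.card ι) := by
  rw [entropy2_eq hA.1, Real.logb]
  apply div_le_div_of_nonneg_right _ (Real.log_nonneg (by norm_num))
  have hx := hA.eigenvalues_nonneg
  have hsum : ∑ i, hA.1.eigenvalues i = 1 := by
    have := hA.1.trace_eq_sum_eigenvalues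
    rw [htr] at this
    have := congrArg Complex.re this
    simpa using this.symm
  have hN : (0 : ℝ) < Fintype.card ι := by
    rcases isEmpty_or_nonempty ι with h | h
    · simp at hsum
    · exact_mod_cast Fintype.card_pos
  have key : ∀ i, -(hA.1.eigenvalues i * Real.log (hA.1.eigenvalues i))
      - hA.1.eigenvalues i * Real.log (Fintype.card ι)
      ≤ 1 / (Fintype.card ι : ℝ) - hA.1.eigenvalues i := by
    intro i
    have h0 : 0 ≤ hA.1.eigenvalues i := hx i
    by_cases hxi : hA.1.eigenvalues i = 0
    · rw [hxi]; simp
    · have hpos : 0 < hA.1.eigenvalues i := lt_of_le_of_ne h0 (Ne.symm hxi)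
      have := Real.log_le_sub_one_of_pos (x := (hA.1.eigenvalues i * Fintype.card ι)⁻¹)
        (by positivity)
      rw [Real.log_inv, Real.log_mul hpos.ne' hN.ne'] at this
      have h2 := mul_le_mul_of_nonneg_left this h0
      have h3 : hA.1.eigenvalues i * ((hA.1.eigenvalues i * Fintype.card ι)⁻¹ - 1)
        = 1 / (Fintype.card ι : ℝ) - hA.1.eigenvalues i := by field_simp
      rw [h3] at h2
      linarith
  have := Finset.sum_le_sum fun i (_ : i ∈ Finset.univ) => key i
  simp only [Finset.sum_sub_distrib, Finset.sum_neg_distrib, ← Finset.sum_mul, hsum,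
    Finset.sum_const, Finset.card_univ, nsmul_eq_mul] at this
  have h4 : (Fintype.card ι : ℝ) * (1 / Fintype.card ι) = 1 := by field_simp
  rw [h4] at this
  linarith

lemma entropy2_rank1 {ι : Type*} [Fintype ι] [DecidableEq ι] {P : Matrix ι ι ℂ}
    (hP : P.IsHermitian) (hPP : P * P = P) (htr : P.trace = 1) (a b : ℝ) :
    entropy2 ((a : ℂ) • P + (b : ℂ) • (1 : Matrix ι ι ℂ)) =
      -((a + b) * Real.log (a + b) + ((Fintype.card ι : ℝ) - 1) * (b * Real.log b))
        / Real.log 2 := by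
  obtain ⟨σ, hσ⟩ : ∃ σ, σ = (a : ℂ) • P + (b : ℂ) • (1 : Matrix ι ι ℂ) := ⟨_, rfl⟩
  have hH : σ.IsHermitian := by
    rw [hσ]
    unfold Matrix.IsHermitian
    simp [hP.eq]
  rw [← hσ, entropy2_eq hH]
  congr 2
  have hq : ∀ i, (hH.eigenvalues i - b) * (hH.eigenvalues i - b) = a * (hH.eigenvalues i - b) := by
    intro i
    obtain ⟨U, h1, h2, h3⟩ := exists_diag hH
    have e : ∀ c : ℂ, diagonal (fun i => (hH.eigenvalues i : ℂ)) - c • (1 : Matrix ι ι ℂ)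
        = Uᴴ * (σ - c • (1 : Matrix ι ι ℂ)) * U := by
      intro c
      rw [mul_sub, sub_mul]
      simp only [mul_smul_comm, smul_mul_assoc, mul_one, h1]
      congr 1
      conv_rhs => rw [h3]
      simp only [Matrix.mul_assoc, h1, Matrix.mul_one]
      rw [← Matrix.mul_assoc, h1, Matrix.one_mul]
    have e2 : σ - (b : ℂ) • (1 : Matrix ι ι ℂ) = (a : ℂ) • P := by rw [hσ]; simp
    have e3 := e b
    rw [e2] at e3
    have e4 : (Uᴴ * ((a : ℂ) • P) * U) * (Uᴴ * ((a : ℂ) • P) * U)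
        = (a : ℂ) • (Uᴴ * ((a : ℂ) • P) * U) := by
      have : (Uᴴ * ((a : ℂ) • P) * U) * (Uᴴ * ((a : ℂ) • P) * U)
        = Uᴴ * ((a : ℂ) • P) * (U * Uᴴ) * ((a : ℂ) • P) * U := by simp only [Matrix.mul_assoc]
      rw [this, h2, Matrix.mul_one]
      simp only [mul_smul_comm, smul_mul_assoc, Matrix.mul_assoc]
      rw [← Matrix.mul_assoc P P, hPP]
    rw [← e3] at e4
    have e5 : diagonal (fun i => (hH.eigenvalues i : ℂ)) - (b : ℂ) • (1 : Matrix ι ι ℂ)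
        = diagonal (fun i => ((hH.eigenvalues i - b : ℝ) : ℂ)) := by
      ext i j
      by_cases hij : i = j <;> simp [hij]
    rw [e5, diagonal_mul_diagonal] at e4
    have := congrArg (fun M : Matrix ι ι ℂ => M i i) e4
    simp only [diagonal_apply_eq, Matrix.smul_apply, smul_eq_mul] at this
    exact_mod_cast this
  have hsum : ∑ i, (hH.eigenvalues i - b) = a := by
    have e1 := hH.trace_eq_sum_eigenvalues
    have e2 : σ.trace = (a : ℂ) + b * Fintype.card ι := by
      rw [hσ]; simp [htr]
    rw [e2] at e1
    have e3 := congrArg Complex.re e1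
    simp at e3
    rw [Finset.sum_sub_distrib, ← e3]
    simp; ring
  by_cases ha : a = 0
  · have : ∀ i, hH.eigenvalues i = b := by
      intro i
      have := hq i
      rw [ha, zero_mul] at this
      have := mul_self_eq_zero.1 this
      linarith
    simp only [this, ha]
    simp; ring
  · have : ∀ i, hH.eigenvalues i * Real.log (hH.eigenvalues i) = b * Real.log b +
        (hH.eigenvalues i - b) * (((a + b) * Real.log (a + b) - b * Real.log b) / a) := by
      intro i
      have h := hq i
      by_cases h0 : hH.eigenvalues i - b = 0
      · rw [h0]
        have : hH.eigenvalues i = b := by linarith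
        rw [this]; ring
      · have h1 : hH.eigenvalues i - b = a := mul_right_cancel₀ h0 h
        have : hH.eigenvalues i = a + b := by linarith
        rw [h1, this]; field_simp; ring
    simp only [this]
    rw [Finset.sum_add_distrib, ← Finset.sum_mul (f := fun i => hH.eigenvalues i - b), hsum]
    simp only [Finset.sum_const, Finset.card_univ, nsmul_eq_mul]
    field_simp
    ring

lemma idTensor_depol (n d : ℕ) (lam : ℝ) (X : Matrix (Fin d × Fin n) (Fin d × Fin n) ℂ) :
    idTensor d (depol n lam) X = (lam : ℂ) • X +
      (((1 - lam) / n : ℝ) : ℂ) • (ptrace2 X ⊗ₖ (1 : Matrix (Fin n) (Fin n) ℂ)) := by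
  ext ⟨a, i⟩ ⟨b, j⟩
  simp only [idTensor, depol, ptrace2, trace, kroneckerMap_apply, Matrix.add_apply,
    Matrix.smul_apply, smul_eq_mul]
  rfl

lemma ptrace2_conj {d n : ℕ} (W : Matrix (Fin d) (Fin d) ℂ)
    (X : Matrix (Fin d × Fin n) (Fin d × Fin n) ℂ) :
    ptrace2 ((W ⊗ₖ (1 : Matrix (Fin n) (Fin n) ℂ))ᴴ * X * (W ⊗ₖ (1 : Matrix (Fin n) (Fin n) ℂ)))
      = Wᴴ * ptrace2 X * W := by
  ext a b
  simp only [ptrace2, mul_apply, conjTranspose_apply, kroneckerMap_apply, Fintype.sum_prod_type,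
    one_apply, mul_ite, mul_one, mul_zero, Finset.sum_ite_eq, Finset.sum_ite_eq', Finset.mem_univ,
    if_true, apply_ite star, star_zero, ite_mul, zero_mul, Finset.sum_mul, Finset.mul_sum]
  rw [Finset.sum_comm]
  refine Finset.sum_congr rfl fun x _ => ?_
  rw [Finset.sum_comm]

lemma ptrace2_psd {d n : ℕ} {X : Matrix (Fin d × Fin n) (Fin d × Fin n) ℂ}
    (hX : X.PosSemidef) : (ptrace2 X).PosSemidef := by
  have : ptrace2 X = ∑ j, X.submatrix (fun a => (a, j)) (fun a => (a, j)) := by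
    ext a b; simp [ptrace2, Matrix.sum_apply]
  rw [this]
  exact posSemidef_sum _ fun j _ => hX.submatrix _

lemma ptrace1_psd {d n : ℕ} {X : Matrix (Fin d × Fin n) (Fin d × Fin n) ℂ}
    (hX : X.PosSemidef) : (ptrace1 X).PosSemidef := by
  have : ptrace1 X = ∑ a, X.submatrix (fun j => (a, j)) (fun j => (a, j)) := by
    ext a b; simp [ptrace1, Matrix.sum_apply]
  rw [this]
  exact posSemidef_sum _ fun j _ => hX.submatrix _

lemma ptrace1_trace {d n : ℕ} (X : Matrix (Fin d × Fin n) (Fin d × Fin n) ℂ) :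
    (ptrace1 X).trace = X.trace := by
  simp only [trace, diag_apply, ptrace1, Fintype.sum_prod_type]
  rw [Finset.sum_comm]

lemma ptrace2_trace {d n : ℕ} (X : Matrix (Fin d × Fin n) (Fin d × Fin n) ℂ) :
    (ptrace2 X).trace = X.trace := by
  simp only [trace, diag_apply, ptrace2, Fintype.sum_prod_type]

open scoped MatrixOrder Matrix.Norms.L2Operator in
lemma psd_factor {ι : Type*} [Fintype ι] [DecidableEq ι] {A : Matrix ι ι ℂ}
    (hA : A.PosSemidef) : ∃ B : Matrix ι ι ℂ, A = Bᴴ * B := by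
  obtain ⟨B, hB⟩ := CStarAlgebra.nonneg_iff_eq_star_mul_self.mp (nonneg_iff_posSemidef.2 hA)
  exact ⟨B, hB⟩

lemma pinch {d n : ℕ} (hd : 1 ≤ d) {X : Matrix (Fin d × Fin n) (Fin d × Fin n) ℂ}
    (hX : X.PosSemidef) (p : Fin d → ℝ) (hp : ptrace2 X = diagonal (fun a => (p a : ℂ))) :
    (diagonal (fun x : Fin d × Fin n => (p x.1 : ℂ)) - ((1 / d : ℝ) : ℂ) • X).PosSemidef := by
  have hd0 : (0 : ℝ) < d := by exact_mod_cast hd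
  have hherm : (diagonal (fun x : Fin d × Fin n => (p x.1 : ℂ)) - ((1 / d : ℝ) : ℂ) • X).IsHermitian := by
    apply IsHermitian.sub
    · apply isHermitian_diagonal_of_self_adjoint
      ext i; simp
    · exact (hX.smul (a := ((1 / d : ℝ) : ℂ)) (by exact_mod_cast (by positivity))).1
  obtain ⟨B, hB⟩ := psd_factor hX
  refine .of_dotProduct_mulVec_nonneg hherm fun x => ?_
  have hpv : ∀ a, p a = ∑ j, ∑ k, ‖B k (a, j)‖ ^ 2 := by
    intro a
    have := congrArg (fun M : Matrix (Fin d) (Fin d) ℂ => (M a a).re) hp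
    simp only [diagonal_apply_eq, Complex.ofReal_re, ptrace2, Complex.re_sum] at this
    rw [← this, hB]
    refine Finset.sum_congr rfl fun j _ => ?_
    rw [mul_apply, Complex.re_sum]
    refine Finset.sum_congr rfl fun k _ => ?_
    rw [conjTranspose_apply, Complex.star_def, ← Complex.normSq_eq_conj_mul_self,
      Complex.ofReal_re, Complex.normSq_eq_norm_sq]
  have e1 : star x ⬝ᵥ (X *ᵥ x) = ((∑ k, ‖(B *ᵥ x) k‖ ^ 2 : ℝ) : ℂ) := by
    rw [hB, ← mulVec_mulVec, dotProduct_mulVec, vecMul_conjTranspose, star_star]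
    simp only [dotProduct, Pi.star_apply, Complex.star_def]
    push_cast
    exact Finset.sum_congr rfl fun k _ => Complex.conj_mul' _
  have e2 : star x ⬝ᵥ (diagonal (fun x : Fin d × Fin n => (p x.1 : ℂ)) *ᵥ x)
      = ((∑ a, p a * ∑ j, ‖x (a, j)‖ ^ 2 : ℝ) : ℂ) := by
    simp only [dotProduct, mulVec_diagonal, Pi.star_apply, Complex.star_def, Fintype.sum_prod_type]
    push_cast
    refine Finset.sum_congr rfl fun a _ => ?_
    rw [Finset.mul_sum]
    refine Finset.sum_congr rfl fun j _ => ?_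
    rw [← Complex.conj_mul']; ring
  have main : ∑ k, ‖(B *ᵥ x) k‖ ^ 2 ≤ d * ∑ a, p a * ∑ j, ‖x (a, j)‖ ^ 2 := by
    have hk : ∀ k, ‖(B *ᵥ x) k‖ ^ 2 ≤
        d * ∑ a, (∑ j, ‖B k (a, j)‖ ^ 2) * ∑ j, ‖x (a, j)‖ ^ 2 := by
      intro k
      have s1 : ‖(B *ᵥ x) k‖ ≤ ∑ a, ∑ j, ‖B k (a, j)‖ * ‖x (a, j)‖ := by
        simp only [mulVec, dotProduct, Fintype.sum_prod_type]
        refine (norm_sum_le _ _).trans (Finset.sum_le_sum fun a _ => ?_)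
        refine (norm_sum_le _ _).trans (Finset.sum_le_sum fun j _ => ?_)
        rw [norm_mul]
      calc ‖(B *ᵥ x) k‖ ^ 2 ≤ (∑ a, ∑ j, ‖B k (a, j)‖ * ‖x (a, j)‖) ^ 2 := by gcongr
        _ ≤ (Finset.univ : Finset (Fin d)).card * ∑ a, (∑ j, ‖B k (a, j)‖ * ‖x (a, j)‖) ^ 2 :=
          sq_sum_le_card_mul_sum_sq
        _ ≤ _ := by
          rw [Finset.card_univ, Fintype.card_fin]
          gcongr with a _
          exact Finset.sum_mul_sq_le_sq_mul_sq _ _ _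
    refine (Finset.sum_le_sum fun k _ => hk k).trans (le_of_eq ?_)
    rw [← Finset.mul_sum, Finset.sum_comm]
    congr 1
    refine Finset.sum_congr rfl fun a _ => ?_
    rw [← Finset.sum_mul, hpv a, Finset.sum_comm]
  rw [sub_mulVec, smul_mulVec, dotProduct_sub, dotProduct_smul, e1, e2, smul_eq_mul,
    ← Complex.ofReal_mul, ← Complex.ofReal_sub]
  rw [Complex.zero_le_real, sub_nonneg, div_mul_eq_mul_div, one_mul, div_le_iff₀ hd0]
  linarith

lemma single_bound_diag {n d : ℕ} (hd : 1 ≤ d) (hn : 1 ≤ n) (lam : ℝ) (hl0 : 0 ≤ lam)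
    (hl1 : lam ≤ 1) {X : Matrix (Fin d × Fin n) (Fin d × Fin n) ℂ}
    (hX : X.PosSemidef) (htr : X.trace = 1) (p : Fin d → ℝ)
    (hp : ptrace2 X = diagonal (fun a => (p a : ℂ))) :
    entropy2 (ptrace2 X) - entropy2 (idTensor d (depol n lam) X) ≤
      (1 / d * ((d * lam + (1 - lam) / n) * Real.log (d * lam + (1 - lam) / n)) +
        (n - 1 / d) * ((1 - lam) / n * Real.log ((1 - lam) / n))) / Real.log 2 := by
  have hd0 : (0 : ℝ) < d := by exact_mod_cast hd
  have hn0 : (0 : ℝ) < n := by exact_mod_cast hn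
  obtain ⟨b, hb⟩ : ∃ b, b = (1 - lam) / (n : ℝ) := ⟨_, rfl⟩
  have hb0 : 0 ≤ b := by rw [hb]; apply div_nonneg <;> linarith
  have hbn : n * b = 1 - lam := by rw [hb]; field_simp
  obtain ⟨τ, hτ⟩ : ∃ τ : Matrix (Fin d × Fin n) (Fin d × Fin n) ℂ,
    τ = diagonal (fun x => (p x.1 : ℂ)) := ⟨_, rfl⟩
  have hk : ptrace2 X ⊗ₖ (1 : Matrix (Fin n) (Fin n) ℂ) = τ := by
    rw [hp, hτ, ← diagonal_one, diagonal_kronecker_diagonal]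
    simp
  have h2 := pinch hd hX p hp
  rw [← hτ] at h2
  have h1 : (((1 / d : ℝ) : ℂ) • X).PosSemidef :=
    hX.smul (by exact_mod_cast (by positivity))
  have hσ : idTensor d (depol n lam) X =
      ((d * lam + b : ℝ) : ℂ) • (((1 / d : ℝ) : ℂ) • X) +
        (b : ℂ) • (τ - ((1 / d : ℝ) : ℂ) • X) := by
    rw [idTensor_depol, hk, ← hb, smul_sub, smul_smul, smul_smul]
    have : (lam : ℂ) = ((d * lam + b : ℝ) : ℂ) * ((1 / d : ℝ) : ℂ) - b * ((1 / d : ℝ) : ℂ) := by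
      norm_cast
      field_simp
      ring
    have h' := congrArg (fun z : ℂ => z • X) this
    simp only [sub_smul] at h'
    rw [h']
    abel
  have hσp : (idTensor d (depol n lam) X).PosSemidef := by
    rw [hσ]
    exact (h1.smul (by exact_mod_cast (by positivity))).add (h2.smul (by exact_mod_cast hb0))
  obtain ⟨U, u1, u2, u3⟩ := exists_diag hσp.1
  have key := relent _ _ U h1 h2 (d * lam + b) b (by positivity) hb0 (fun x => p x.1)
    hσp.1.eigenvalues (by rw [hτ]; simp) u1 u2 (by rw [← hσ]; exact u3)
  rw [← hσ] at key
  have hpa : ∀ a, ∑ j, (X (a, j) (a, j)).re = p a := by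
    intro a
    have := congrArg (fun M : Matrix (Fin d) (Fin d) ℂ => (M a a).re) hp
    simpa only [diagonal_apply_eq, Complex.ofReal_re, ptrace2, Complex.re_sum] using this
  have hps : ∑ a, p a = 1 := by
    have := ptrace2_trace X
    rw [hp, htr, trace_diagonal] at this
    exact_mod_cast this
  have hcross : ∑ x, (idTensor d (depol n lam) X x x).re * Real.log (p x.1)
      = ∑ a, p a * Real.log (p a) := by
    rw [Fintype.sum_prod_type]
    refine Finset.sum_congr rfl fun a _ => ?_
    simp only
    rw [← Finset.sum_mul]
    congr 1
    rw [idTensor_depol, hk, hτ, ← hb]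
    simp only [Matrix.add_apply, Matrix.smul_apply, smul_eq_mul, Complex.add_re,
      Complex.re_ofReal_mul, diagonal_apply_eq, Complex.ofReal_re, Finset.sum_add_distrib,
      ← Finset.mul_sum, hpa, Finset.sum_const, Finset.card_univ, Fintype.card_fin, nsmul_eq_mul]
    have : b * (n * p a) = (n * b) * p a := by ring
    rw [this, hbn]; ring
  have ht1 : (((1 / d : ℝ) : ℂ) • X).trace.re = 1 / d := by
    rw [trace_smul, htr, smul_eq_mul, mul_one, Complex.ofReal_re]
  have hτt : τ.trace.re = n := by
    rw [hτ, trace_diagonal, Fintype.sum_prod_type]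
    simp only [Complex.re_sum, Complex.ofReal_re, Finset.sum_const, Finset.card_univ,
      Fintype.card_fin, nsmul_eq_mul]
    have hre : ∀ i, ((n : ℂ) * (p i : ℂ)).re = n * p i := by
      intro i
      rw [← Complex.ofReal_natCast, ← Complex.ofReal_mul, Complex.ofReal_re]
    simp only [hre]
    rw [← Finset.mul_sum, hps, mul_one]
  have ht2 : (τ - ((1 / d : ℝ) : ℂ) • X).trace.re = n - 1 / d := by
    rw [trace_sub, Complex.sub_re, ht1, hτt]
  rw [hcross, ht1, ht2] at key
  rw [entropy2_eq hσp.1, hp, entropy2_diag, ← hb, ← sub_div]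
  apply div_le_div_of_nonneg_right _ (Real.log_nonneg (by norm_num))
  linarith

lemma single_bound {n d : ℕ} (hd : 1 ≤ d) (hn : 1 ≤ n) (lam : ℝ) (hl0 : 0 ≤ lam)
    (hl1 : lam ≤ 1) {X : Matrix (Fin d × Fin n) (Fin d × Fin n) ℂ}
    (hX : X.PosSemidef) (htr : X.trace = 1) :
    entropy2 (ptrace2 X) - entropy2 (idTensor d (depol n lam) X) ≤
      (1 / d * ((d * lam + (1 - lam) / n) * Real.log (d * lam + (1 - lam) / n)) +
        (n - 1 / d) * ((1 - lam) / n * Real.log ((1 - lam) / n))) / Real.log 2 := by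
  have hP := ptrace2_psd hX
  obtain ⟨W, w1, w2, w3⟩ := exists_diag hP.1
  obtain ⟨V, hV⟩ : ∃ V, V = W ⊗ₖ (1 : Matrix (Fin n) (Fin n) ℂ) := ⟨_, rfl⟩
  have v2 : V * Vᴴ = 1 := by
    rw [hV, conjTranspose_kronecker, ← mul_kronecker_mul, w2, conjTranspose_one, Matrix.one_mul,
      one_kronecker_one]
  have hpt : ptrace2 (Vᴴ * X * V) = Wᴴ * ptrace2 X * W := by rw [hV]; exact ptrace2_conj W X
  have hdg : ptrace2 (Vᴴ * X * V) = diagonal (fun a => (hP.1.eigenvalues a : ℂ)) := by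
    rw [hpt]
    conv_lhs => rw [w3]
    simp only [Matrix.mul_assoc, w1, Matrix.mul_one]
    rw [← Matrix.mul_assoc, w1, Matrix.one_mul]
  have htr' : (Vᴴ * X * V).trace = 1 := by
    rw [trace_mul_comm, ← Matrix.mul_assoc, v2, Matrix.one_mul, htr]
  have main := single_bound_diag hd hn lam hl0 hl1 (hX.conjTranspose_mul_mul_same V) htr' _ hdg
  have e1 : entropy2 (ptrace2 (Vᴴ * X * V)) = entropy2 (ptrace2 X) := by
    rw [hpt, entropy2_conj hP.1 w2]
  have hH : (idTensor d (depol n lam) X).IsHermitian := by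
    rw [idTensor_depol]
    unfold Matrix.IsHermitian
    simp [conjTranspose_kronecker, hX.1.eq, hP.1.eq]
  have e2 : idTensor d (depol n lam) (Vᴴ * X * V) = Vᴴ * idTensor d (depol n lam) X * V := by
    rw [idTensor_depol, idTensor_depol, hpt, mul_add, add_mul]
    simp only [mul_smul_comm, smul_mul_assoc]
    congr 2
    rw [hV, conjTranspose_kronecker, ← mul_kronecker_mul, ← mul_kronecker_mul]
    simp
  rw [e1, e2, entropy2_conj hH v2] at main
  exact main

lemma bound_arith {n d : ℕ} (hd : 1 ≤ d) (hn : 1 ≤ n) (lam : ℝ) (hl0 : 0 ≤ lam)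
    (hl1 : lam ≤ 1) :
    Real.logb 2 n + (1 / d * ((d * lam + (1 - lam) / n) * Real.log (d * lam + (1 - lam) / n)) +
        (n - 1 / d) * ((1 - lam) / n * Real.log ((1 - lam) / n))) / Real.log 2 =
      Real.logb 2 ((n : ℝ) * d) +
        (lam + (1 - lam) / ((n : ℝ) * d)) * Real.logb 2 (lam + (1 - lam) / ((n : ℝ) * d)) +
        ((n : ℝ) * d - 1) * ((1 - lam) / ((n : ℝ) * d)) *
          Real.logb 2 ((1 - lam) / ((n : ℝ) * d)) := by
  have hd0 : (0 : ℝ) < d := by exact_mod_cast hd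
  have hn0 : (0 : ℝ) < n := by exact_mod_cast hn
  have h2 : Real.log 2 ≠ 0 := (Real.log_pos (by norm_num)).ne'
  obtain ⟨B, hB⟩ : ∃ B, B = (1 - lam) / ((n : ℝ) * d) := ⟨_, rfl⟩
  obtain ⟨A, hA⟩ : ∃ A, A = lam + B := ⟨_, rfl⟩
  have hb : (1 - lam) / (n : ℝ) = d * B := by rw [hB]; field_simp
  have hsum : A + (n * d - 1) * B = 1 := by
    have : n * d * B = 1 - lam := by rw [hB]; field_simp
    rw [hA]; linarith
  have ha : d * lam + d * B = d * A := by rw [hA]; ring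
  rw [← hB, ← hA, hb, ha]
  have hxl : ∀ x : ℝ, x * Real.log (d * x) = x * Real.log d + x * Real.log x := by
    intro x
    by_cases hx : x = 0
    · simp [hx]
    · rw [Real.log_mul hd0.ne' hx]; ring
  rw [mul_assoc (d : ℝ) A, mul_assoc (d : ℝ) B, hxl A, hxl B]
  simp only [Real.logb]
  rw [Real.log_mul hn0.ne' hd0.ne']
  have hA' : A = 1 - (n * d - 1) * B := by linarith
  field_simp
  have hz : (A + (n * d - 1) * B) * Real.log d = 1 * Real.log d := by rw [hsum]
  linarith

/-- A maximally entangled vector attached to `c`. -/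
def mev {n d : ℕ} (c : Fin d → Fin n) : Fin d × Fin n → ℂ :=
  fun x => if x.2 = c x.1 then ((1 / Real.sqrt d : ℝ) : ℂ) else 0

lemma mev_entry {n d : ℕ} (hd : 1 ≤ d) (c : Fin d → Fin n) (x y : Fin d × Fin n) :
    vecMulVec (mev c) (star (mev c)) x y =
      if x.2 = c x.1 ∧ y.2 = c y.1 then ((1 / d : ℝ) : ℂ) else 0 := by
  have hd0 : (0 : ℝ) < d := by exact_mod_cast hd
  have : (1 / Real.sqrt d) * (1 / Real.sqrt d) = 1 / (d : ℝ) := by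
    rw [div_mul_div_comm, Real.mul_self_sqrt hd0.le, one_mul]
  rw [← this]
  simp only [vecMulVec_apply, mev, Pi.star_apply]
  by_cases h1 : x.2 = c x.1 <;> by_cases h2 : y.2 = c y.1 <;> simp [h1, h2]

lemma mev_trace {n d : ℕ} (hd : 1 ≤ d) (c : Fin d → Fin n) :
    (vecMulVec (mev c) (star (mev c))).trace = 1 := by
  have hd0 : (d : ℂ) ≠ 0 := by
    have : d ≠ 0 := by omega
    exact_mod_cast this
  simp only [trace, diag_apply, mev_entry hd, and_self, Fintype.sum_prod_type]
  simp [hd0]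

lemma mev_ptrace2 {n d : ℕ} (hd : 1 ≤ d) (c : Fin d → Fin n) (hc : Function.Injective c) :
    ptrace2 (vecMulVec (mev c) (star (mev c))) = diagonal (fun _ => ((1 / d : ℝ) : ℂ)) := by
  ext a b
  simp only [ptrace2, mev_entry hd]
  by_cases hab : a = b
  · subst hab; simp
  · rw [diagonal_apply_ne _ hab]
    apply Finset.sum_eq_zero
    intro j _
    rw [if_neg]
    rintro ⟨h1, h2⟩
    exact hab (hc (h1.symm.trans h2))

lemma mev_ptrace1 {n d : ℕ} (hd : 1 ≤ d) (c : Fin d → Fin n) :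
    ptrace1 (vecMulVec (mev c) (star (mev c))) =
      diagonal (fun u => ∑ a, if u = c a then ((1 / d : ℝ) : ℂ) else 0) := by
  ext u v
  simp only [ptrace1, mev_entry hd]
  by_cases huv : u = v
  · subst huv; simp
  · rw [diagonal_apply_ne _ huv]
    apply Finset.sum_eq_zero
    intro j _
    rw [if_neg]
    rintro ⟨h1, h2⟩
    exact huv (h1.trans h2.symm)

lemma mev_value {n d : ℕ} (hd : 1 ≤ d) (hn : 1 ≤ n) (lam : ℝ)
    (c : Fin d → Fin n) (hc : Function.Injective c) :
    entropy2 (ptrace2 (vecMulVec (mev c) (star (mev c)))) -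
        entropy2 (idTensor d (depol n lam) (vecMulVec (mev c) (star (mev c)))) =
      Real.logb 2 d +
        (lam + (1 - lam) / ((n : ℝ) * d)) * Real.logb 2 (lam + (1 - lam) / ((n : ℝ) * d)) +
        ((n : ℝ) * d - 1) * ((1 - lam) / ((n : ℝ) * d)) *
          Real.logb 2 ((1 - lam) / ((n : ℝ) * d)) := by
  have hd0 : (0 : ℝ) < d := by exact_mod_cast hd
  have hn0 : (0 : ℝ) < n := by exact_mod_cast hn
  have hid : idTensor d (depol n lam) (vecMulVec (mev c) (star (mev c))) =
      (lam : ℂ) • vecMulVec (mev c) (star (mev c)) +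
        (((1 - lam) / ((n : ℝ) * d) : ℝ) : ℂ) •
          (1 : Matrix (Fin d × Fin n) (Fin d × Fin n) ℂ) := by
    rw [idTensor_depol, mev_ptrace2 hd c hc, ← diagonal_one, diagonal_kronecker_diagonal,
      ← diagonal_smul, ← diagonal_one, ← diagonal_smul]
    congr 2
    ext x
    simp only [Pi.smul_apply, smul_eq_mul, mul_one]
    norm_cast
    field_simp
    push_cast
    ring
  have hP := posSemidef_vecMulVec_self_star (mev c)
  have htr := mev_trace hd c
  have hPP : vecMulVec (mev c) (star (mev c)) * vecMulVec (mev c) (star (mev c))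
      = vecMulVec (mev c) (star (mev c)) := by
    have h1 : star (mev c) ⬝ᵥ mev c = 1 := by
      rw [← htr, trace_vecMulVec, dotProduct_comm]
    rw [vecMulVec_mul_vecMulVec, h1]
    simp
  rw [hid, entropy2_rank1 hP.1 hPP htr, mev_ptrace2 hd c hc, entropy2_diag]
  simp only [Finset.sum_const, Finset.card_univ, Fintype.card_fin, Fintype.card_prod,
    nsmul_eq_mul, Real.logb]
  rw [one_div, Real.log_inv]
  push_cast
  field_simp
  ring

/-- the product-state `d`-restricted classical capacity of the depolarizing
channel equals
`log₂(nd) + (λ + (1−λ)/(nd)) log₂(λ + (1−λ)/(nd)) + (nd−1)((1−λ)/(nd)) log₂((1−λ)/(nd))`. -/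
theorem statement11 (n d : ℕ) (hd : 1 ≤ d) (hdn : d ≤ n) (lam : ℝ) (hl0 : 0 ≤ lam)
    (hl1 : lam ≤ 1) :
    Cprod d (depol n lam) =
      Real.logb 2 ((n : ℝ) * d) +
        (lam + (1 - lam) / ((n : ℝ) * d)) * Real.logb 2 (lam + (1 - lam) / ((n : ℝ) * d)) +
        ((n : ℝ) * d - 1) * ((1 - lam) / ((n : ℝ) * d)) *
          Real.logb 2 ((1 - lam) / ((n : ℝ) * d)) := by
  have hn : 1 ≤ n := hd.trans hdn
  have hd0 : (0 : ℝ) < d := by exact_mod_cast hd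
  have hn0 : (0 : ℝ) < n := by exact_mod_cast hn
  unfold Cprod
  apply IsGreatest.csSup_eq
  constructor
  · haveI : NeZero n := ⟨by omega⟩
    let c : Fin n → Fin d → Fin n := fun k a => Fin.castLE hdn a + k
    have hc : ∀ k, Function.Injective (c k) := by
      intro k a b hab
      exact Fin.castLE_injective hdn (add_right_cancel hab)
    refine ⟨n, fun _ => 1 / n, fun k => vecMulVec (mev (c k)) (star (mev (c k))), ?_, ?_, ?_, ?_⟩
    · intro i; positivity
    · simp [hn0.ne']
    · intro i
      exact ⟨posSemidef_vecMulVec_self_star _, mev_trace hd _⟩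
    · have havg : (∑ k : Fin n, (1 / n : ℝ) •
          depol n lam (ptrace1 (vecMulVec (mev (c k)) (star (mev (c k))))))
          = diagonal (fun _ => ((1 / n : ℝ) : ℂ)) := by
        have h1 : ∑ k : Fin n, ptrace1 (vecMulVec (mev (c k)) (star (mev (c k)))) = 1 := by
          ext u v
          simp only [Matrix.sum_apply, mev_ptrace1 hd]
          by_cases huv : u = v
          · subst huv
            simp only [diagonal_apply_eq, one_apply_eq]
            rw [Finset.sum_comm]
            have : ∀ a : Fin d, ∑ k : Fin n, (if u = c k a then ((1 / d : ℝ) : ℂ) else 0)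
                = ((1 / d : ℝ) : ℂ) := by
              intro a
              have : ∀ k : Fin n, (u = c k a) ↔ (k = u - Fin.castLE hdn a) := by
                intro k
                simp only [c]
                rw [eq_sub_iff_add_eq', eq_comm]
              simp only [this, Finset.sum_ite_eq', Finset.mem_univ, if_true]
            simp only [this, Finset.sum_const, Finset.card_univ, Fintype.card_fin, nsmul_eq_mul]
            norm_cast
            field_simp
          · simp [diagonal_apply_ne _ huv, one_apply_ne huv]
        have h2 : ∀ k : Fin n, depol n lam (ptrace1 (vecMulVec (mev (c k)) (star (mev (c k)))))
            = (lam : ℂ) • ptrace1 (vecMulVec (mev (c k)) (star (mev (c k))))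
              + (((1 - lam) / n : ℝ) : ℂ) • (1 : Matrix (Fin n) (Fin n) ℂ) := by
          intro k
          rw [depol, ptrace1_trace, mev_trace hd, one_smul]
        simp only [h2]
        rw [← Finset.smul_sum, Finset.sum_add_distrib, ← Finset.smul_sum, h1]
        simp only [Finset.sum_const, Finset.card_univ, Fintype.card_fin, ← Nat.cast_smul_eq_nsmul ℂ]
        have hnc : (n : ℂ) ≠ 0 := by exact_mod_cast hn0.ne'
        ext u v
        by_cases huv : u = v
        · subst huv
          simp
          field_simp
          ring
        · simp [diagonal_apply_ne _ huv, one_apply_ne huv]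
      rw [havg, entropy2_diag]
      simp only [mev_value hd hn lam _ (hc _)]
      simp only [Finset.sum_const, Finset.card_univ, Fintype.card_fin, nsmul_eq_mul]
      have hl : Real.logb 2 ((n : ℝ) * d) = Real.logb 2 n + Real.logb 2 d :=
        Real.logb_mul hn0.ne' hd0.ne'
      have hl2 : -(n * (1 / n * Real.log (1 / n))) / Real.log 2 = Real.logb 2 n := by
        rw [one_div, Real.log_inv, Real.logb]; field_simp
      have hl3 : ∀ z : ℝ, (n : ℝ) * (1 / n * z) = z := by intro z; field_simp
      rw [hl2, hl3, hl]
      ring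
  · rintro r ⟨k, w, ρ, hw, hw1, hρ, rfl⟩
    rw [← bound_arith hd hn lam hl0 hl1]
    apply add_le_add
    · have hps : ∀ i, (depol n lam (ptrace1 (ρ i))).PosSemidef := by
        intro i
        rw [depol, ptrace1_trace, (hρ i).2, one_smul]
        refine ((ptrace1_psd (hρ i).1).smul (by exact_mod_cast hl0)).add
          (PosSemidef.one.smul ?_)
        exact_mod_cast div_nonneg (by linarith) hn0.le
      have htr : ∀ i, (depol n lam (ptrace1 (ρ i))).trace = 1 := by
        intro i
        rw [depol, ptrace1_trace, (hρ i).2, one_smul, trace_add, trace_smul, trace_smul,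
          ptrace1_trace, (hρ i).2, trace_one, Fintype.card_fin]
        simp only [smul_eq_mul]
        norm_cast
        field_simp
        simp
      have := entropy2_le (A := ∑ i, w i • depol n lam (ptrace1 (ρ i)))
        (posSemidef_sum _ fun i _ => (hps i).smul (hw i)) (by
          rw [trace_sum]
          simp only [trace_smul, htr]
          rw [← Finset.sum_smul, hw1, one_smul])
      rwa [Fintype.card_fin] at this
    · refine (Finset.sum_le_sum fun i _ => mul_le_mul_of_nonneg_left
        (single_bound hd hn lam hl0 hl1 (hρ i).1 (hρ i).2) (hw i)).trans (le_of_eq ?_)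
      rw [← Finset.sum_mul, hw1, one_mul]
end
end

section
/- Let n ≥ 1, k ≥ 1 and 0 ≤ s ≤ k. For every density matrix ρ on (ℂ^n)^{⊗k} = ℂ^{n^k}: (s/k) · S(ρ) ≤ (1/binom(k,s)) · ∑_{A ⊆ {1,…,k}, |A| = s} S(ρ_A), where ρ_A denotes the reduced density matrix obtained from ρ by tracing out all tensor factors with index outside A, and S is the von Neumann entropy with natural logarithm. -/
noncomputable section

open scoped BigOperators ComplexOrder
open Matrix

/-- The von Neumann entropy (natural logarithm) `S(ρ) = −tr(ρ ln ρ)`, computed via the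
eigenvalues (with the convention `0 ln 0 = 0`). -/
def entropyLn {ι : Type*} [Fintype ι] [DecidableEq ι] (ρ : Matrix ι ι ℂ) : ℝ :=
  if h : ρ.IsHermitian then -∑ i, h.eigenvalues i * Real.log (h.eigenvalues i) else 0

/-- The reduced density matrix `ρ_A` of `ρ` on `(ℂ^n)^{⊗k}`, obtained by tracing out all
tensor factors with index outside `A`. -/
def reduced {n k : ℕ} (ρ : Matrix (Fin k → Fin n) (Fin k → Fin n) ℂ) (A : Finset (Fin k)) :
    Matrix ({ i : Fin k // i ∈ A } → Fin n) ({ i : Fin k // i ∈ A } → Fin n) ℂ :=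
  fun u v => ∑ w : { i : Fin k // i ∉ A } → Fin n,
    ρ (fun i => if h : i ∈ A then u ⟨i, h⟩ else w ⟨i, h⟩)
      (fun i => if h : i ∈ A then v ⟨i, h⟩ else w ⟨i, h⟩)


/-- Real diagonal matrix. -/
def dg {m : Type*} [DecidableEq m] (d : m → ℝ) : Matrix m m ℂ :=
  diagonal (fun i => (d i : ℂ))

lemma dg_quad {m : Type*} [Fintype m] [DecidableEq m] (d : m → ℝ) (x : m → ℂ) :
    star x ⬝ᵥ (dg d *ᵥ x) = ((∑ i, d i * Complex.normSq (x i) : ℝ) : ℂ) := by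
  simp only [dg, dotProduct, mulVec_diagonal, Pi.star_apply, RCLike.star_def]
  push_cast
  refine Finset.sum_congr rfl fun i _ => ?_
  rw [Complex.normSq_eq_conj_mul_self]
  ring

lemma dg_quad_conj {m l : Type*} [Fintype m] [DecidableEq m] [Fintype l] (d : m → ℝ)
    (V : Matrix m l ℂ) (x : l → ℂ) :
    star x ⬝ᵥ ((Vᴴ * dg d * V) *ᵥ x) =
      ((∑ i, d i * Complex.normSq ((V *ᵥ x) i) : ℝ) : ℂ) := by
  rw [← dg_quad, ← mulVec_mulVec, ← mulVec_mulVec, dotProduct_mulVec, star_mulVec]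

lemma dg_herm {m : Type*} [DecidableEq m] (d : m → ℝ) : (dg d)ᴴ = dg d := by
  simp [dg, diagonal_conjTranspose]

lemma dg_mul {m : Type*} [Fintype m] [DecidableEq m] (d e : m → ℝ) :
    dg d * dg e = dg (fun i => d i * e i) := by
  simp [dg, diagonal_mul_diagonal]

lemma dg_one {m : Type*} [DecidableEq m] : dg (fun _ : m => (1 : ℝ)) = 1 := by
  simp [dg]

lemma sqrt_step {m l : Type*} [Fintype m] [DecidableEq m] [Fintype l] [DecidableEq l]
    (V : Matrix m l ℂ) (hV : Vᴴ * V = 1) (r : m → ℝ) (t : l → ℝ) (hr : ∀ i, 0 ≤ r i)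
    (ht : ∀ i, 0 ≤ t i) (h : (dg t - Vᴴ * dg r * V).PosSemidef) :
    (dg (fun i => √(t i)) - Vᴴ * dg (fun i => √(r i)) * V).PosSemidef := by
  set D : Matrix m m ℂ := dg (fun i => √(r i)) with hD
  set K : Matrix l l ℂ := Vᴴ * D * V with hK
  have hDh : Dᴴ = D := dg_herm _
  have hKh : Kᴴ = K := by
    simp [hK, hDh, Matrix.mul_assoc]
  have hDD : D * D = dg r := by
    rw [hD, dg_mul]; congr 1; funext i; exact Real.mul_self_sqrt (hr i)
  have hproj : (1 - V * Vᴴ).PosSemidef := by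
    have : (1 - V * Vᴴ) = (1 - V * Vᴴ)ᴴ * (1 - V * Vᴴ) := by
      simp only [conjTranspose_sub, conjTranspose_one, conjTranspose_mul,
        conjTranspose_conjTranspose, Matrix.sub_mul, Matrix.mul_sub, Matrix.one_mul,
        Matrix.mul_one]
      have : V * Vᴴ * (V * Vᴴ) = V * (Vᴴ * V) * Vᴴ := by simp only [Matrix.mul_assoc]
      rw [this, hV]; simp
    rw [this]; exact posSemidef_conjTranspose_mul_self _
  have hKK : (dg t - K * K).PosSemidef := by
    have h2 := hproj.conjTranspose_mul_mul_same (D * V)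
    have h3 := h.add h2
    convert h3 using 1
    have e1 : (D * V)ᴴ * (1 - V * Vᴴ) * (D * V) = Vᴴ * dg r * V - K * K := by
      rw [← hDD, hK, conjTranspose_mul, hDh, Matrix.mul_sub, Matrix.sub_mul]
      simp only [Matrix.mul_assoc, Matrix.one_mul]
    rw [e1]; abel
  have hB : (dg (fun i => √(t i)) - K).IsHermitian := by
    simp [IsHermitian, hKh, dg_herm]
  rw [hB.posSemidef_iff_eigenvalues_nonneg]
  intro i
  by_contra hneg
  simp only [Pi.zero_apply, not_le] at hneg
  have hev := hB.mulVec_eigenvectorBasis i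
  generalize hB.eigenvalues i = μ at hev hneg
  set u : l → ℂ := ⇑(hB.eigenvectorBasis i) with hu
  have hune : u ≠ 0 := by
    intro h0
    have := hB.eigenvectorBasis.orthonormal.ne_zero i
    apply this
    ext j
    exact congrFun h0 j
  have hKu : K *ᵥ u = dg (fun i => √(t i) - μ) *ᵥ u := by
    rw [Matrix.sub_mulVec] at hev
    funext j
    have := congrFun hev j
    simp only [dg, Pi.sub_apply, mulVec_diagonal, Pi.smul_apply, Complex.real_smul] at this ⊢
    push_cast
    linear_combination -this
  have hq := hKK.dotProduct_mulVec_nonneg u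
  have e2 : star u ⬝ᵥ ((K * K) *ᵥ u) = ((∑ j, (√(t j) - μ) ^ 2 * Complex.normSq (u j) : ℝ) : ℂ) := by
    rw [← mulVec_mulVec, dotProduct_mulVec]
    have : star u ᵥ* K = star (K *ᵥ u) := by rw [star_mulVec, hKh]
    rw [this, hKu, star_mulVec, dg_herm, ← dotProduct_mulVec, mulVec_mulVec, dg_mul, dg_quad]
    simp only [sq]
  rw [Matrix.sub_mulVec, dotProduct_sub, e2, dg_quad, ← Complex.ofReal_sub, Complex.zero_le_real,
    ← Finset.sum_sub_distrib] at hq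
  obtain ⟨j0, hj0⟩ : ∃ j, u j ≠ 0 := by
    by_contra hc; push Not at hc; exact hune (funext hc)
  have : ∑ j, (t j * Complex.normSq (u j) - (√(t j) - μ) ^ 2 * Complex.normSq (u j)) < 0 := by
    have key : ∀ j, t j - (√(t j) - μ) ^ 2 < 0 := by
      intro j
      nlinarith [Real.sq_sqrt (ht j), Real.sqrt_nonneg (t j)]
    apply Finset.sum_neg'
    · intro j _
      rw [← sub_mul]
      exact mul_nonpos_of_nonpos_of_nonneg (key j).le (Complex.normSq_nonneg _)
    · refine ⟨j0, Finset.mem_univ _, ?_⟩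
      rw [← sub_mul]
      exact mul_neg_of_neg_of_pos (key j0) (Complex.normSq_pos.2 hj0)
  linarith

lemma pow_step {m l : Type*} [Fintype m] [DecidableEq m] [Fintype l] [DecidableEq l]
    (V : Matrix m l ℂ) (hV : Vᴴ * V = 1) (r : m → ℝ) (t : l → ℝ) (hr : ∀ i, 0 ≤ r i)
    (ht : ∀ i, 0 ≤ t i) (h : (dg t - Vᴴ * dg r * V).PosSemidef) (N : ℕ) :
    (dg (fun i => (t i) ^ (((2:ℝ) ^ N)⁻¹)) -
      Vᴴ * dg (fun i => (r i) ^ (((2:ℝ) ^ N)⁻¹)) * V).PosSemidef := by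
  induction N with
  | zero => simpa using h
  | succ N ih =>
    have := sqrt_step V hV _ _ (fun i => Real.rpow_nonneg (hr i) _)
      (fun i => Real.rpow_nonneg (ht i) _) ih
    have key : ∀ x : ℝ, 0 ≤ x → x ^ (((2:ℝ) ^ (N+1))⁻¹) = √(x ^ (((2:ℝ) ^ N)⁻¹)) := by
      intro x hx
      rw [Real.sqrt_eq_rpow, ← Real.rpow_mul hx]
      congr 1
      rw [pow_succ]; field_simp
    simp only [key _ (hr _), key _ (ht _)]
    exact this

lemma log_jensen {m l : Type*} [Fintype m] [DecidableEq m] [Fintype l] [DecidableEq l]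
    (V : Matrix m l ℂ) (hV : Vᴴ * V = 1) (r : m → ℝ) (t : l → ℝ) (hr : ∀ i, 0 < r i)
    (ht : ∀ i, 0 < t i) (h : Vᴴ * dg r * V = dg t) (x : l → ℂ) :
    ∑ i, Real.log (r i) * Complex.normSq ((V *ᵥ x) i) ≤
      ∑ j, Real.log (t j) * Complex.normSq (x j) := by
  have h1 := pow_step V hV r t (fun i => (hr i).le) (fun i => (ht i).le)
    (by rw [h, sub_self]; exact PosSemidef.zero)
  have hnorm : ∑ i, Complex.normSq ((V *ᵥ x) i) = ∑ j, Complex.normSq (x j) := by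
    have a := dg_quad_conj (fun _ => 1) V x
    have b := dg_quad (fun _ => 1) x
    rw [dg_one, Matrix.mul_one, hV] at a
    rw [dg_one, a] at b
    simpa using (Complex.ofReal_injective b)
  have h2 : ∀ N : ℕ, ∑ i, (((2:ℝ) ^ N)⁻¹)⁻¹ * ((r i) ^ (((2:ℝ) ^ N)⁻¹) - 1) *
        Complex.normSq ((V *ᵥ x) i) ≤
      ∑ j, (((2:ℝ) ^ N)⁻¹)⁻¹ * ((t j) ^ (((2:ℝ) ^ N)⁻¹) - 1) * Complex.normSq (x j) := by
    intro N
    have := (h1 N).dotProduct_mulVec_nonneg x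
    rw [Matrix.sub_mulVec, dotProduct_sub, dg_quad_conj, dg_quad, ← Complex.ofReal_sub,
      Complex.zero_le_real] at this
    simp only [mul_assoc, ← Finset.mul_sum]
    apply mul_le_mul_of_nonneg_left _ (by positivity)
    simp only [sub_mul, one_mul, Finset.sum_sub_distrib]
    linarith
  have hlim : Filter.Tendsto (fun N : ℕ => ((2:ℝ) ^ N)⁻¹) Filter.atTop (nhds 0) :=
    tendsto_inv_atTop_zero.comp (tendsto_pow_atTop_atTop_of_one_lt (by norm_num))
  have hl : ∀ x : ℝ, 0 < x → Filter.Tendsto (fun N : ℕ => (((2:ℝ) ^ N)⁻¹)⁻¹ *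
      (x ^ (((2:ℝ) ^ N)⁻¹) - 1)) Filter.atTop (nhds (Real.log x)) := by
    intro x hx
    exact (tendsto_rpow_sub_one_log hx).comp
      (tendsto_nhdsWithin_iff.2 ⟨hlim,
        Filter.Eventually.of_forall fun N => by simp⟩)
  refine le_of_tendsto_of_tendsto' (b := Filter.atTop) ?_ ?_ h2
  · exact tendsto_finsetSum _ fun i _ => (hl _ (hr i)).mul_const _
  · exact tendsto_finsetSum _ fun i _ => (hl _ (ht i)).mul_const _

lemma log_jensen' {m l : Type*} [Fintype m] [DecidableEq m] [Fintype l] [DecidableEq l]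
    (T : Matrix m l ℂ) (p q : m → ℝ) (p' q' : l → ℝ) (hp : ∀ i, 0 < p i) (hq : ∀ i, 0 < q i)
    (hp' : ∀ i, 0 < p' i) (hq' : ∀ i, 0 < q' i)
    (h1 : Tᴴ * dg p * T = dg p') (h2 : Tᴴ * dg q * T = dg q') (x : l → ℂ) :
    ∑ i, p i * (Real.log (q i) - Real.log (p i)) * Complex.normSq ((T *ᵥ x) i) ≤
      ∑ j, p' j * (Real.log (q' j) - Real.log (p' j)) * Complex.normSq (x j) := by
  set V : Matrix m l ℂ := dg (fun i => √(p i)) * T * dg (fun j => (√(p' j))⁻¹) with hVdef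
  have hgen : ∀ f : m → ℝ, Vᴴ * dg f * V =
      dg (fun j => (√(p' j))⁻¹) * (Tᴴ * dg (fun i => f i * p i) * T) *
        dg (fun j => (√(p' j))⁻¹) := by
    intro f
    have : dg (fun i => f i * p i) = dg (fun i => √(p i)) * dg f * dg (fun i => √(p i)) := by
      rw [dg_mul, dg_mul]; congr 1; funext i
      linear_combination (-f i) * Real.mul_self_sqrt (hp i).le
    rw [this, hVdef]
    simp only [conjTranspose_mul, dg_herm, Matrix.mul_assoc]
  have hs : ∀ j, √(p' j) ≠ 0 := fun j => (Real.sqrt_pos.2 (hp' j)).ne'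
  have hV : Vᴴ * V = 1 := by
    have := hgen (fun _ => 1)
    rw [dg_one, Matrix.mul_one] at this
    rw [this]
    simp only [one_mul]
    rw [h1, dg_mul, dg_mul, ← dg_one]
    congr 1; funext j
    have := hs j
    field_simp
    rw [Real.sq_sqrt (hp' j).le]
  have hR : Vᴴ * dg (fun i => q i / p i) * V = dg (fun j => q' j / p' j) := by
    rw [hgen]
    have : (fun i => q i / p i * p i) = q := by
      funext i; exact div_mul_cancel₀ _ (hp i).ne'
    rw [this, h2, dg_mul, dg_mul]
    congr 1; funext j
    have := hs j
    have := (hp' j).ne'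
    field_simp
    rw [Real.sq_sqrt (hp' j).le, mul_comm]
  have := log_jensen V hV _ _ (fun i => div_pos (hq i) (hp i)) (fun j => div_pos (hq' j) (hp' j))
    hR (dg (fun j => √(p' j)) *ᵥ x)
  have hVx : V *ᵥ (dg (fun j => √(p' j)) *ᵥ x) = dg (fun i => √(p i)) *ᵥ (T *ᵥ x) := by
    rw [mulVec_mulVec, mulVec_mulVec, hVdef, Matrix.mul_assoc, dg_mul]
    have : (fun j => (√(p' j))⁻¹ * √(p' j)) = fun _ => (1:ℝ) := by
      funext j; exact inv_mul_cancel₀ (hs j)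
    rw [this, dg_one, Matrix.mul_one]
  rw [hVx] at this
  have e : ∀ a b : ℝ, 0 < a → 0 < b → Real.log (b / a) = Real.log b - Real.log a :=
    fun a b ha hb => Real.log_div hb.ne' ha.ne'
  have e2 : ∀ a : ℝ, 0 < a → ∀ z : ℂ, Complex.normSq ((√a : ℂ) * z) = a * Complex.normSq z := by
    intro a ha z
    rw [Complex.normSq_mul, Complex.normSq_ofReal, Real.mul_self_sqrt ha.le]
  simp only [dg, mulVec_diagonal, e _ _ (hp _) (hq _), e _ _ (hp' _) (hq' _), e2 _ (hp _),
    e2 _ (hp' _)] at this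
  convert this using 2 <;> ring

open scoped Kronecker

lemma entropy_of_diag {m : Type*} [Fintype m] [DecidableEq m] (M U : Matrix m m ℂ) (d : m → ℝ)
    (hU : Uᴴ * U = 1) (hM : M = U * dg d * Uᴴ) :
    entropyLn M = ∑ i, Real.negMulLog (d i) := by
  have hH : M.IsHermitian := by
    rw [IsHermitian, hM]; simp [dg_herm, Matrix.mul_assoc]
  have h1 := hH.roots_charpoly_eq_eigenvalues
  have h2 : M.charpoly.roots = Multiset.map (fun i => (d i : ℂ)) Finset.univ.val := by
    rw [hM, charpoly_mul_comm, ← Matrix.mul_assoc, hU, Matrix.one_mul, dg, charpoly_diagonal]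
    rw [Polynomial.roots_prod _ _ (Finset.prod_ne_zero_iff.2 fun i _ => Polynomial.X_sub_C_ne_zero _)]
    simp
  rw [h1] at h2
  have h3 := congrArg (fun s => (s.map (fun z : ℂ => Real.negMulLog z.re)).sum) h2
  simp only [Multiset.map_map, Function.comp_def, Complex.ofReal_re, Complex.coe_algebraMap] at h3
  rw [entropyLn, dif_pos hH, ← Finset.sum_neg_distrib]
  simp only [← neg_mul]
  exact h3

lemma exists_diag_s17 {m : Type*} [Fintype m] [DecidableEq m] (M : Matrix m m ℂ)
    (hM : M.IsHermitian) : ∃ (U : Matrix m m ℂ) (d : m → ℝ), Uᴴ * U = 1 ∧ U * Uᴴ = 1 ∧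
      M = U * dg d * Uᴴ ∧ d = hM.eigenvalues := by
  refine ⟨hM.eigenvectorUnitary, hM.eigenvalues, ?_, ?_, ?_, rfl⟩
  · exact Unitary.coe_star_mul_self hM.eigenvectorUnitary
  · exact Unitary.coe_mul_star_self hM.eigenvectorUnitary
  · exact hM.spectral_theorem

lemma exists_diag_pos {m : Type*} [Fintype m] [DecidableEq m] (M : Matrix m m ℂ)
    (hM : M.PosDef) : ∃ (U : Matrix m m ℂ) (d : m → ℝ), Uᴴ * U = 1 ∧ U * Uᴴ = 1 ∧
      M = U * dg d * Uᴴ ∧ ∀ i, 0 < d i := by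
  obtain ⟨U, d, h1, h2, h3, h4⟩ := exists_diag_s17 M hM.1
  exact ⟨U, d, h1, h2, h3, fun i => by rw [h4]; exact hM.eigenvalues_pos i⟩

/-- The map `X ↦ 1 ⊗ X`. -/
def ampl (α μ : Type*) [DecidableEq α] [DecidableEq μ] :
    Matrix ((α × μ) × (α × μ)) (μ × μ) ℂ :=
  fun x y => if x.1.1 = x.2.1 then (if x.1.2 = y.1 then (if x.2.2 = y.2 then 1 else 0) else 0) else 0

lemma ampl_conj {α μ : Type*} [Fintype α] [Fintype μ] [DecidableEq α] [DecidableEq μ]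
    (A B : Matrix (α × μ) (α × μ) ℂ) (i j i' j' : μ) :
    ((ampl α μ)ᴴ * (A ⊗ₖ B) * ampl α μ) (i, j) (i', j') =
      ∑ b, ∑ a, A (a, i) (b, i') * B (a, j) (b, j') := by
  have h1 : ∀ b i' b' j', ((ampl α μ)ᴴ * (A ⊗ₖ B)) (i, j) ((b, i'), (b', j')) =
      ∑ a, A (a, i) (b, i') * B (a, j) (b', j') := by
    intro b i' b' j'
    simp [mul_apply, ampl, Fintype.sum_prod_type, kroneckerMap_apply, apply_ite (star : ℂ → ℂ)]
  rw [mul_apply]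
  simp only [Fintype.sum_prod_type, h1]
  simp [ampl]

lemma dg_fst {m l : Type*} [DecidableEq m] [DecidableEq l] (p : m → ℝ) :
    dg (fun x : m × l => p x.1) = dg p ⊗ₖ (1 : Matrix l l ℂ) := by
  rw [dg, dg, ← diagonal_one, diagonal_kronecker_diagonal]; simp

lemma dg_snd {m l : Type*} [DecidableEq m] [DecidableEq l] (p : l → ℝ) :
    dg (fun x : m × l => p x.2) = (1 : Matrix m m ℂ) ⊗ₖ dg p := by
  rw [dg, dg, ← diagonal_one, diagonal_kronecker_diagonal]; simp

lemma dg_transpose {m : Type*} [DecidableEq m] (d : m → ℝ) : (dg d)ᵀ = dg d := by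
  simp [dg]

/-- vectorised identity -/
def vone (m : Type*) [DecidableEq m] : m × m → ℂ := fun x => if x.1 = x.2 then 1 else 0

lemma kron_vone {m : Type*} [Fintype m] [DecidableEq m] (A B : Matrix m m ℂ) (x : m × m) :
    ((A ⊗ₖ Bᵀ) *ᵥ vone m) x = (A * B) x.1 x.2 := by
  simp [mulVec, dotProduct, vone, Fintype.sum_prod_type, mul_apply, kroneckerMap_apply]

lemma ampl_vone {α μ : Type*} [Fintype α] [Fintype μ] [DecidableEq α] [DecidableEq μ] :
    ampl α μ *ᵥ vone μ = vone (α × μ) := by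
  funext x
  simp only [mulVec, dotProduct, vone, ampl, Fintype.sum_prod_type, Prod.ext_iff]
  by_cases h : x.1.1 = x.2.1 <;> simp [h, eq_comm]

lemma dpi {α μ : Type*} [Fintype α] [Fintype μ] [DecidableEq α] [DecidableEq μ]
    (ρ σ U Z : Matrix (α × μ) (α × μ) ℂ) (ρ' σ' U' Z' : Matrix μ μ ℂ)
    (p q : α × μ → ℝ) (p' q' : μ → ℝ)
    (hρ : ∀ i j, ρ' i j = ∑ a, ρ (a, i) (a, j)) (hσ : ∀ i j, σ' i j = ∑ a, σ (a, i) (a, j))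
    (hZ2 : Z * Zᴴ = 1) (hU2 : U * Uᴴ = 1)
    (hU'1 : U'ᴴ * U' = 1) (hZ'1 : Z'ᴴ * Z' = 1) (hU'2 : U' * U'ᴴ = 1) (hZ'2 : Z' * Z'ᴴ = 1)
    (eρ : ρ = U * dg p * Uᴴ) (eσ : σ = Z * dg q * Zᴴ)
    (eρ' : ρ' = U' * dg p' * U'ᴴ) (eσ' : σ' = Z' * dg q' * Z'ᴴ)
    (hp : ∀ i, 0 < p i) (hq : ∀ i, 0 < q i) (hp' : ∀ i, 0 < p' i) (hq' : ∀ i, 0 < q' i) :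
    ∑ x : (α × μ) × (α × μ), p x.1 * (Real.log (q x.2) - Real.log (p x.1)) *
        Complex.normSq ((Uᴴ * Z) x.1 x.2) ≤
      ∑ x : μ × μ, p' x.1 * (Real.log (q' x.2) - Real.log (p' x.1)) *
        Complex.normSq ((U'ᴴ * Z') x.1 x.2) := by
  set T := (Uᴴ ⊗ₖ Zᵀ) * ampl α μ * (U' ⊗ₖ Z'ᴴᵀ) with hT
  have hTH : Tᴴ = (U'ᴴ ⊗ₖ Z'ᵀ) * (ampl α μ)ᴴ * (U ⊗ₖ Zᴴᵀ) := by
    rw [hT]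
    simp only [conjTranspose_mul, conjTranspose_kronecker, conjTranspose_conjTranspose,
      Matrix.mul_assoc]
    congr 2
    ext i j; simp
  have hconj : ∀ D : Matrix ((α × μ) × (α × μ)) ((α × μ) × (α × μ)) ℂ, Tᴴ * D * T =
      (U'ᴴ ⊗ₖ Z'ᵀ) * ((ampl α μ)ᴴ * ((U ⊗ₖ Zᴴᵀ) * D * (Uᴴ ⊗ₖ Zᵀ)) * ampl α μ) *
        (U' ⊗ₖ Z'ᴴᵀ) := by
    intro D
    rw [hTH, hT]; simp only [Matrix.mul_assoc]
  have h1 : Tᴴ * dg (fun x : (α × μ) × (α × μ) => p x.1) * T = dg (fun x : μ × μ => p' x.1) := by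
    rw [hconj, dg_fst, dg_fst, ← mul_kronecker_mul, ← mul_kronecker_mul, ← eρ, Matrix.mul_one,
      ← transpose_mul, hZ2, transpose_one]
    have : (ampl α μ)ᴴ * (ρ ⊗ₖ (1 : Matrix (α × μ) (α × μ) ℂ)) * ampl α μ =
        ρ' ⊗ₖ (1 : Matrix μ μ ℂ) := by
      ext ⟨i, j⟩ ⟨i', j'⟩
      rw [ampl_conj]
      simp only [kroneckerMap_apply, hρ, one_apply, Prod.ext_iff]
      by_cases h : j = j' <;> simp [h]
    rw [this, ← mul_kronecker_mul, ← mul_kronecker_mul, Matrix.mul_one, ← transpose_mul, hZ'1,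
      transpose_one, eρ']
    congr 1
    rw [Matrix.mul_assoc, Matrix.mul_assoc, hU'1, Matrix.mul_one, ← Matrix.mul_assoc, hU'1,
      Matrix.one_mul]
  have h2 : Tᴴ * dg (fun x : (α × μ) × (α × μ) => q x.2) * T = dg (fun x : μ × μ => q' x.2) := by
    have eq1 : Zᴴᵀ * dg q * Zᵀ = σᵀ := by
      rw [eσ]; simp only [transpose_mul, dg_transpose, Matrix.mul_assoc]
    rw [hconj, dg_snd, dg_snd, ← mul_kronecker_mul, ← mul_kronecker_mul, eq1, Matrix.mul_one, hU2]
    have : (ampl α μ)ᴴ * ((1 : Matrix (α × μ) (α × μ) ℂ) ⊗ₖ σᵀ) * ampl α μ =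
        (1 : Matrix μ μ ℂ) ⊗ₖ σ'ᵀ := by
      ext ⟨i, j⟩ ⟨i', j'⟩
      rw [ampl_conj]
      simp only [kroneckerMap_apply, transpose_apply, hσ, one_apply, Prod.ext_iff]
      by_cases h : i = i' <;> simp [h]
    rw [this, ← mul_kronecker_mul, ← mul_kronecker_mul, Matrix.mul_one, hU'1, eσ']
    congr 1
    simp only [transpose_mul, dg_transpose]
    have a1 : Z'ᵀ * Z'ᴴᵀ = 1 := by rw [← transpose_mul, hZ'1, transpose_one]
    rw [← Matrix.mul_assoc, ← Matrix.mul_assoc, a1, Matrix.one_mul, Matrix.mul_assoc, a1,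
      Matrix.mul_one]
  have key := log_jensen' T _ _ _ _ (fun x => hp x.1) (fun x => hq x.2) (fun x => hp' x.1)
    (fun x => hq' x.2) h1 h2 ((U'ᴴ ⊗ₖ Z'ᵀ) *ᵥ vone μ)
  have hTx : T *ᵥ ((U'ᴴ ⊗ₖ Z'ᵀ) *ᵥ vone μ) = (Uᴴ ⊗ₖ Zᵀ) *ᵥ vone (α × μ) := by
    rw [mulVec_mulVec, hT, Matrix.mul_assoc, ← mul_kronecker_mul, hU'2, ← transpose_mul, hZ'2,
      transpose_one, one_kronecker_one, Matrix.mul_one, ← mulVec_mulVec, ampl_vone]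
  rw [hTx] at key
  simpa only [kron_vone] using key

lemma relent_eval {m : Type*} [Fintype m] [DecidableEq m] (ρ U Z : Matrix m m ℂ) (p q : m → ℝ)
    (hU : Uᴴ * U = 1) (hZ2 : Z * Zᴴ = 1) (eρ : ρ = U * dg p * Uᴴ) :
    ∑ x : m × m, p x.1 * (Real.log (q x.2) - Real.log (p x.1)) *
        Complex.normSq ((Uᴴ * Z) x.1 x.2) =
      ∑ j, Real.log (q j) * ((Zᴴ * ρ * Z) j j).re + entropyLn ρ := by
  rw [entropy_of_diag ρ U p hU eρ]
  set W := Uᴴ * Z with hW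
  have h1 : ∀ j, ((Zᴴ * ρ * Z) j j).re = ∑ i, p i * Complex.normSq (W i j) := by
    intro j
    have : Zᴴ * ρ * Z = Wᴴ * dg p * W := by
      rw [hW, eρ]; simp [Matrix.mul_assoc]
    rw [this, mul_apply, Complex.re_sum]
    refine Finset.sum_congr rfl fun i _ => ?_
    rw [dg, mul_diagonal, conjTranspose_apply]
    rw [mul_right_comm, RCLike.star_def, ← Complex.normSq_eq_conj_mul_self]
    rw [← Complex.ofReal_mul, Complex.ofReal_re, mul_comm]
  have h2 : ∀ i, ∑ j, Complex.normSq (W i j) = 1 := by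
    intro i
    have : W * Wᴴ = 1 := by
      rw [hW, conjTranspose_mul, conjTranspose_conjTranspose, Matrix.mul_assoc,
        ← Matrix.mul_assoc Z, hZ2, Matrix.one_mul, hU]
    have := congrFun (congrFun this i) i
    rw [mul_apply, one_apply_eq] at this
    apply Complex.ofReal_injective
    rw [Complex.ofReal_one, ← this, Complex.ofReal_sum]
    refine Finset.sum_congr rfl fun j _ => ?_
    rw [← Complex.mul_conj]; rfl
  simp only [h1, Fintype.sum_prod_type, mul_sub, sub_mul, Finset.sum_sub_distrib]
  rw [sub_eq_add_neg]
  congr 1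
  · rw [Finset.sum_comm]
    refine Finset.sum_congr rfl fun j _ => ?_
    rw [Finset.mul_sum]
    exact Finset.sum_congr rfl fun i _ => by ring
  · simp only [← Finset.mul_sum, h2, mul_one, Real.negMulLog, neg_mul, Finset.sum_neg_distrib]

lemma prod_trace {m ν γ : Type*} [Fintype m] [DecidableEq m] [Fintype ν] [DecidableEq ν]
    [Fintype γ] [DecidableEq γ] (e : m ≃ ν × γ) (ρ : Matrix m m ℂ) (τ Z : Matrix ν ν ℂ)
    (q : ν → ℝ) (hτ : ∀ u v, τ u v = ∑ c, ρ (e.symm (u, c)) (e.symm (v, c)))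
    (hZ : Zᴴ * Z = 1) (eτ : τ = Z * dg q * Zᴴ) :
    ∑ j, Real.log (q (e j).1) * (((((Z ⊗ₖ (1 : Matrix γ γ ℂ)).submatrix e e)ᴴ * ρ *
      ((Z ⊗ₖ (1 : Matrix γ γ ℂ)).submatrix e e)) j j).re) = - entropyLn τ := by
  rw [entropy_of_diag τ Z q hZ eτ, ← Finset.sum_neg_distrib]
  set ρ2 := ρ.submatrix e.symm e.symm with hρ2
  have h0 : ρ = ρ2.submatrix e e := by simp [hρ2]
  have h1 : ((Z ⊗ₖ (1 : Matrix γ γ ℂ)).submatrix e e)ᴴ * ρ *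
      ((Z ⊗ₖ (1 : Matrix γ γ ℂ)).submatrix e e) =
      ((Z ⊗ₖ (1 : Matrix γ γ ℂ))ᴴ * ρ2 * (Z ⊗ₖ (1 : Matrix γ γ ℂ))).submatrix e e := by
    rw [h0, conjTranspose_submatrix, submatrix_mul_equiv, submatrix_mul_equiv]
  rw [h1]
  rw [← e.symm.sum_comp]
  simp only [submatrix_apply, Equiv.apply_symm_apply, Fintype.sum_prod_type]
  refine Finset.sum_congr rfl fun u _ => ?_
  rw [← Finset.mul_sum, ← Complex.re_sum]
  have h2 : ∑ c, ((Z ⊗ₖ (1 : Matrix γ γ ℂ))ᴴ * ρ2 * (Z ⊗ₖ (1 : Matrix γ γ ℂ))) (u, c) (u, c) =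
      (Zᴴ * τ * Z) u u := by
    simp only [mul_apply, Fintype.sum_prod_type, conjTranspose_apply, kroneckerMap_apply,
      one_apply, mul_ite, mul_one, mul_zero, Finset.sum_ite_eq', Finset.mem_univ, if_true,
      apply_ite (star : ℂ → ℂ), star_zero, ite_mul, zero_mul, hτ, hρ2, submatrix_apply,
      Finset.sum_mul, Finset.mul_sum]
    rw [Finset.sum_comm]
    refine Finset.sum_congr rfl fun v _ => ?_
    rw [Finset.sum_comm]
  rw [h2, eτ]
  have h3 : Zᴴ * (Z * dg q * Zᴴ) * Z = dg q := by
    rw [Matrix.mul_assoc, Matrix.mul_assoc, hZ, Matrix.mul_one, ← Matrix.mul_assoc, hZ,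
      Matrix.one_mul]
  rw [h3, dg, diagonal_apply_eq, Complex.ofReal_re, Real.negMulLog]
  ring

lemma prod_unit {m ν γ : Type*} [Fintype m] [DecidableEq m] [Fintype ν] [DecidableEq ν]
    [Fintype γ] [DecidableEq γ] (e : m ≃ ν × γ) (A B : Matrix ν ν ℂ) (h : A * B = 1) :
    (A ⊗ₖ (1 : Matrix γ γ ℂ)).submatrix e e * (B ⊗ₖ (1 : Matrix γ γ ℂ)).submatrix e e = 1 := by
  rw [submatrix_mul_equiv, ← mul_kronecker_mul, h]; simp

lemma prod_conjT {m ν γ : Type*} [Fintype m] [DecidableEq m] [Fintype ν] [DecidableEq ν]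
    [Fintype γ] [DecidableEq γ] (e : m ≃ ν × γ) (A : Matrix ν ν ℂ) :
    ((A ⊗ₖ (1 : Matrix γ γ ℂ)).submatrix e e)ᴴ = (Aᴴ ⊗ₖ (1 : Matrix γ γ ℂ)).submatrix e e := by
  rw [conjTranspose_submatrix, conjTranspose_kronecker]; simp

lemma prod_diag {m ν γ : Type*} [Fintype m] [DecidableEq m] [Fintype ν] [DecidableEq ν]
    [Fintype γ] [DecidableEq γ] (e : m ≃ ν × γ) (τ Z : Matrix ν ν ℂ) (q : ν → ℝ)
    (eτ : τ = Z * dg q * Zᴴ) :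
    (τ ⊗ₖ (1 : Matrix γ γ ℂ)).submatrix e e = (Z ⊗ₖ (1 : Matrix γ γ ℂ)).submatrix e e *
      dg (fun j => q (e j).1) * ((Z ⊗ₖ (1 : Matrix γ γ ℂ)).submatrix e e)ᴴ := by
  have : dg (fun j => q (e j).1) = (dg (fun x : ν × γ => q x.1)).submatrix e e := by
    simp [dg, Function.comp_def]
  rw [this, dg_fst, prod_conjT, submatrix_mul_equiv, submatrix_mul_equiv, ← mul_kronecker_mul,
    ← mul_kronecker_mul, eτ]
  simp

lemma posDef_ptrace {m ν ω : Type*} [Fintype ω] [Nonempty ω]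
    (ρ : Matrix m m ℂ) (hρ : ρ.PosDef) (g : ω → ν → m) (hg : ∀ w, Function.Injective (g w)) :
    (Matrix.of fun u v => ∑ w, ρ (g w u) (g w v)).PosDef := by
  have : (Matrix.of fun u v => ∑ w, ρ (g w u) (g w v)) = ∑ w, ρ.submatrix (g w) (g w) := by
    ext u v; simp [Matrix.sum_apply]
  rw [this]
  exact posDef_sum Finset.univ_nonempty fun w _ => hρ.submatrix (hg w)

lemma ssa_posDef {α β γ : Type*} [Fintype α] [DecidableEq α] [Fintype β] [DecidableEq β]
    [Fintype γ] [DecidableEq γ] [Nonempty α] [Nonempty γ]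
    (ρ : Matrix (α × β × γ) (α × β × γ) ℂ) (hρ : ρ.PosDef) :
    entropyLn ρ +
      entropyLn (Matrix.of fun u v : β => ∑ w : α × γ, ρ (w.1, u, w.2) (w.1, v, w.2)) ≤
    entropyLn (Matrix.of fun u v : α × β => ∑ w : γ, ρ (u.1, u.2, w) (v.1, v.2, w)) +
      entropyLn (Matrix.of fun u v : β × γ => ∑ w : α, ρ (w, u) (w, v)) := by
  set ρab := (Matrix.of fun u v : α × β => ∑ w : γ, ρ (u.1, u.2, w) (v.1, v.2, w)) with hab
  set ρbc := (Matrix.of fun u v : β × γ => ∑ w : α, ρ (w, u) (w, v)) with hbc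
  set ρb := (Matrix.of fun u v : β => ∑ w : α × γ, ρ (w.1, u, w.2) (w.1, v, w.2)) with hb
  have pab : ρab.PosDef := posDef_ptrace ρ hρ (fun w (u : α × β) => (u.1, u.2, w))
    (fun w u v h => by simpa [Prod.ext_iff] using h)
  have pbc : ρbc.PosDef := posDef_ptrace ρ hρ (fun w (u : β × γ) => (w, u))
    (fun w u v h => by simpa [Prod.ext_iff] using h)
  have pb : ρb.PosDef := posDef_ptrace ρ hρ (fun w (u : β) => ((w : α × γ).1, u, w.2))
    (fun w u v h => by simpa [Prod.ext_iff] using h)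
  obtain ⟨U, p, hU1, hU2, eU, hp⟩ := exists_diag_pos ρ hρ
  obtain ⟨U', p', hU'1, hU'2, eU', hp'⟩ := exists_diag_pos ρbc pbc
  obtain ⟨Z, q, hZ1, hZ2, eZ, hq⟩ := exists_diag_pos ρab pab
  obtain ⟨Z', q', hZ'1, hZ'2, eZ', hq'⟩ := exists_diag_pos ρb pb
  let e : α × β × γ ≃ (α × β) × γ := (Equiv.prodAssoc α β γ).symm
  let e' : β × γ ≃ β × γ := Equiv.refl _
  have key := dpi ρ ((ρab ⊗ₖ (1 : Matrix γ γ ℂ)).submatrix e e) U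
    ((Z ⊗ₖ (1 : Matrix γ γ ℂ)).submatrix e e) ρbc ((ρb ⊗ₖ (1 : Matrix γ γ ℂ)).submatrix e' e') U'
    ((Z' ⊗ₖ (1 : Matrix γ γ ℂ)).submatrix e' e') p (fun j => q (e j).1) p' (fun j => q' (e' j).1)
    (fun i j => rfl)
    (by
      rintro ⟨b, c⟩ ⟨b', c'⟩
      simp only [e, e', hab, hb, submatrix_apply, kroneckerMap_apply, Equiv.refl_apply,
        Equiv.prodAssoc_symm_apply, of_apply, Fintype.sum_prod_type, Finset.sum_mul])
    (by rw [prod_conjT]; exact prod_unit _ _ _ hZ2) hU2 hU'1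
    (by rw [prod_conjT]; exact prod_unit _ _ _ hZ'1) hU'2
    (by rw [prod_conjT]; exact prod_unit _ _ _ hZ'2) eU (prod_diag e _ _ _ eZ) eU'
    (prod_diag e' _ _ _ eZ') hp (fun j => hq _) hp' (fun j => hq' _)
  rw [relent_eval ρ U ((Z ⊗ₖ (1 : Matrix γ γ ℂ)).submatrix e e) p (fun j => q (e j).1) hU1 (by rw [prod_conjT]; exact prod_unit _ _ _ hZ2) eU,
    relent_eval ρbc U' ((Z' ⊗ₖ (1 : Matrix γ γ ℂ)).submatrix e' e') p' (fun j => q' (e' j).1) hU'1 (by rw [prod_conjT]; exact prod_unit _ _ _ hZ'2) eU',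
    prod_trace e ρ ρab Z q (fun u v => rfl) hZ1 eZ,
    prod_trace e' ρbc ρb Z' q' (fun u v => by
      simp only [e', hb, hbc, of_apply, Fintype.sum_prod_type, Equiv.refl_symm, Equiv.refl_apply]
      rw [Finset.sum_comm]) hZ'1 eZ'] at key
  linarith

lemma entropy_submatrix {m l : Type*} [Fintype m] [DecidableEq m] [Fintype l] [DecidableEq l]
    (M : Matrix m m ℂ) (hM : M.IsHermitian) (e : l ≃ m) :
    entropyLn (M.submatrix e e) = entropyLn M := by
  obtain ⟨U, d, h1, h2, h3, -⟩ := exists_diag_s17 M hM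
  rw [entropy_of_diag M U d h1 h3, entropy_of_diag (M.submatrix e e) (U.submatrix e e) (d ∘ e)]
  · exact e.sum_comp (fun i => Real.negMulLog (d i))
  · rw [conjTranspose_submatrix, submatrix_mul_equiv, h1]; simp
  · have : dg (d ∘ e) = (dg d).submatrix e e := by simp [dg, Function.comp_def]
    rw [conjTranspose_submatrix, this, submatrix_mul_equiv, submatrix_mul_equiv, ← h3]

lemma entropy_shift_tendsto {m : Type*} [Fintype m] [DecidableEq m]
    (M : Matrix m m ℂ) (hM : M.IsHermitian) (c : ℝ) :
    Filter.Tendsto (fun x : ℝ => entropyLn (M + ((x * c : ℝ) : ℂ) • 1))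
      (nhdsWithin 0 (Set.Ioi 0)) (nhds (entropyLn M)) := by
  obtain ⟨U, d, h1, h2, h3, -⟩ := exists_diag_s17 M hM
  have h4 : ∀ x : ℝ, entropyLn (M + ((x * c : ℝ) : ℂ) • 1) =
      ∑ i, Real.negMulLog (d i + x * c) := by
    intro x
    apply entropy_of_diag _ U _ h1
    have : dg (fun i => d i + x * c) = dg d + ((x * c : ℝ) : ℂ) • 1 := by
      ext i j
      by_cases h : i = j <;> simp [dg, h]
    rw [this, Matrix.mul_add, Matrix.add_mul, ← h3]
    simp [h2]
  simp only [h4]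
  rw [entropy_of_diag M U d h1 h3]
  refine (tendsto_finsetSum _ fun i _ => ?_)
  have : Continuous (fun x : ℝ => Real.negMulLog (d i + x * c)) := by
    exact Real.continuous_negMulLog.comp (by fun_prop)
  have h5 := this.tendsto 0
  simp only [zero_mul, add_zero] at h5
  exact h5.mono_left nhdsWithin_le_nhds

lemma reduced_herm {n k : ℕ} (ρ : Matrix (Fin k → Fin n) (Fin k → Fin n) ℂ)
    (hρ : ρ.IsHermitian) (S : Finset (Fin k)) : (reduced ρ S).IsHermitian := by
  ext u v
  simp only [conjTranspose_apply, reduced, star_sum]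
  exact Finset.sum_congr rfl fun w _ => hρ.apply _ _

lemma entropy_reduced {n k : ℕ} (hn : 1 ≤ n) (ρ : Matrix (Fin k → Fin n) (Fin k → Fin n) ℂ)
    (hρ : ρ.IsHermitian) (S : Finset (Fin k)) {X Y : Type*} [Fintype X] [DecidableEq X]
    [Fintype Y] [DecidableEq Y] (r : (Fin k → Fin n) ≃ X × Y)
    (rX : ({ i : Fin k // i ∈ S } → Fin n) → X) (rY : ({ i : Fin k // i ∉ S } → Fin n) → Y)
    (h : ∀ f, r f = (rX (fun i => f i), rY (fun i => f i))) :
    entropyLn (reduced ρ S) =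
      entropyLn (Matrix.of fun u v : X => ∑ w : Y, ρ (r.symm (u, w)) (r.symm (v, w))) := by
  haveI : NeZero n := ⟨by omega⟩
  let E := Equiv.piEquivPiSubtypeProd (fun i : Fin k => i ∈ S) (fun _ => Fin n)
  have hb : Function.Bijective (Prod.map rX rY) := by
    have : Prod.map rX rY = r ∘ E.symm := by
      funext x
      have : x = E (E.symm x) := (E.apply_symm_apply x).symm
      conv_lhs => rw [this]
      simp only [Function.comp_apply]
      rw [h]; rfl
    rw [this]; exact r.bijective.comp E.symm.bijective
  obtain ⟨hX, hY⟩ := Prod.map_bijective.1 hb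
  let eX := Equiv.ofBijective rX hX
  let eY := Equiv.ofBijective rY hY
  have hr : ∀ u w, r.symm (eX u, eY w) = E.symm (u, w) := by
    intro u w
    rw [Equiv.symm_apply_eq, h]
    have : E (E.symm (u, w)) = (u, w) := E.apply_symm_apply _
    have h1 : (fun i : {i // i ∈ S} => E.symm (u, w) i) = u := congrArg Prod.fst this
    have h2 : (fun i : {i // i ∉ S} => E.symm (u, w) i) = w := congrArg Prod.snd this
    rw [h1, h2]; rfl
  have hh : (Matrix.of fun u v : X => ∑ w : Y, ρ (r.symm (u, w)) (r.symm (v, w))).IsHermitian := by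
    ext u v
    simp only [conjTranspose_apply, of_apply, star_sum]
    exact Finset.sum_congr rfl fun w _ => hρ.apply _ _
  rw [← entropy_submatrix _ hh eX]
  congr 1
  ext u v
  rw [submatrix_apply, of_apply, ← eY.sum_comp]
  simp only [hr]
  rfl

lemma ssa_reduced_posDef {n k : ℕ} (hn : 1 ≤ n)
    (ρ : Matrix (Fin k → Fin n) (Fin k → Fin n) ℂ)
    (hρ : ρ.PosDef) (A B C : Finset (Fin k)) (hAB : Disjoint A B) (hAC : Disjoint A C)
    (hBC : Disjoint B C) :
    entropyLn (reduced ρ (A ∪ B ∪ C)) + entropyLn (reduced ρ B) ≤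
      entropyLn (reduced ρ (A ∪ B)) + entropyLn (reduced ρ (B ∪ C)) := by
  haveI : NeZero n := ⟨by omega⟩
  let D : Finset (Fin k) := (A ∪ B ∪ C)ᶜ
  let X : Finset (Fin k) → Type := fun P => { i : Fin k // i ∈ P } → Fin n
  letI : ∀ P, Fintype (X P) := fun P => inferInstanceAs (Fintype ({ i : Fin k // i ∈ P } → Fin n))
  letI : ∀ P, DecidableEq (X P) := fun P =>
    inferInstanceAs (DecidableEq ({ i : Fin k // i ∈ P } → Fin n))
  haveI : ∀ P, Nonempty (X P) := fun P =>
    inferInstanceAs (Nonempty ({ i : Fin k // i ∈ P } → Fin n))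
  let res : (P : Finset (Fin k)) → (Fin k → Fin n) → X P := fun P f i => f i
  let f0 : (Fin k → Fin n) → X A × X B × X C × X D := fun f => (res A f, res B f, res C f, res D f)
  have hD : ∀ i, i ∉ A → i ∉ B → i ∉ C → i ∈ D := by
    intro i h1 h2 h3; simp [D, h1, h2, h3]
  have hD' : ∀ i, i ∈ D → i ∉ A ∧ i ∉ B ∧ i ∉ C := by
    intro i h; simpa [D, not_or, and_assoc] using h
  have hf0 : Function.Bijective f0 := by
    constructor
    · intro f g hfg
      simp only [f0, Prod.mk.injEq] at hfg
      obtain ⟨h1, h2, h3, h4⟩ := hfg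
      funext i
      by_cases iA : i ∈ A
      · exact congrFun h1 ⟨i, iA⟩
      by_cases iB : i ∈ B
      · exact congrFun h2 ⟨i, iB⟩
      by_cases iC : i ∈ C
      · exact congrFun h3 ⟨i, iC⟩
      exact congrFun h4 ⟨i, hD i iA iB iC⟩
    · rintro ⟨a, b, c, d⟩
      refine ⟨fun i => if hA : i ∈ A then a ⟨i, hA⟩ else if hB : i ∈ B then b ⟨i, hB⟩ else
        if hC : i ∈ C then c ⟨i, hC⟩ else d ⟨i, hD i hA hB hC⟩, ?_⟩
      simp only [f0, Prod.mk.injEq]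
      refine ⟨?_, ?_, ?_, ?_⟩
      · funext ⟨i, hi⟩
        simp [res, hi]
      · funext ⟨i, hi⟩
        have := Finset.disjoint_right.1 hAB hi
        simp [res, hi, this]
      · funext ⟨i, hi⟩
        have h1 := Finset.disjoint_right.1 hAC hi
        have h2 := Finset.disjoint_right.1 hBC hi
        simp [res, hi, h1, h2]
      · funext ⟨i, hi⟩
        obtain ⟨h1, h2, h3⟩ := hD' i hi
        simp [res, h1, h2, h3]
  let r0 := Equiv.ofBijective f0 hf0
  let τ : Matrix (X A × X B × X C) (X A × X B × X C) ℂ :=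
    Matrix.of fun u v => ∑ w : X D, ρ (r0.symm (u.1, u.2.1, u.2.2, w)) (r0.symm (v.1, v.2.1, v.2.2, w))
  have hτ : τ.PosDef := posDef_ptrace ρ hρ
    (fun (w : X D) (u : X A × X B × X C) => r0.symm (u.1, u.2.1, u.2.2, w)) (by
      intro w u v h
      have := r0.symm.injective h
      simpa [Prod.ext_iff] using this)
  have key := ssa_posDef τ hτ
  let e1 : X A × X B × X C × X D ≃ (X A × X B × X C) × X D :=
    ⟨fun x => ((x.1, x.2.1, x.2.2.1), x.2.2.2), fun y => (y.1.1, y.1.2.1, y.1.2.2, y.2),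
      fun _ => rfl, fun _ => rfl⟩
  let e2 : X A × X B × X C × X D ≃ X B × ((X A × X C) × X D) :=
    ⟨fun x => (x.2.1, (x.1, x.2.2.1), x.2.2.2), fun y => (y.2.1.1, y.1, y.2.1.2, y.2.2),
      fun _ => rfl, fun _ => rfl⟩
  let e3 : X A × X B × X C × X D ≃ (X A × X B) × (X C × X D) :=
    ⟨fun x => ((x.1, x.2.1), x.2.2.1, x.2.2.2), fun y => (y.1.1, y.1.2, y.2.1, y.2.2),
      fun _ => rfl, fun _ => rfl⟩
  let e4 : X A × X B × X C × X D ≃ (X B × X C) × (X A × X D) :=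
    ⟨fun x => ((x.2.1, x.2.2.1), x.1, x.2.2.2), fun y => (y.2.1, y.1.1, y.1.2, y.2.2),
      fun _ => rfl, fun _ => rfl⟩
  have mA : ∀ i : {i // i ∈ A}, (i : Fin k) ∉ B ∪ C := fun i => by
    simp [Finset.disjoint_left.1 hAB i.2, Finset.disjoint_left.1 hAC i.2]
  have mA' : ∀ i : {i // i ∈ A}, (i : Fin k) ∉ B := fun i => Finset.disjoint_left.1 hAB i.2
  have mC : ∀ i : {i // i ∈ C}, (i : Fin k) ∉ A ∪ B := fun i => by
    simp [Finset.disjoint_right.1 hBC i.2, Finset.disjoint_right.1 hAC i.2]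
  have mC' : ∀ i : {i // i ∈ C}, (i : Fin k) ∉ B := fun i => Finset.disjoint_right.1 hBC i.2
  have s1 := entropy_reduced hn ρ hρ.1 (A ∪ B ∪ C) (r0.trans e1)
    (fun f => (fun i => f ⟨i, by simp [i.2]⟩, fun i => f ⟨i, by simp [i.2]⟩,
      fun i => f ⟨i, by simp [i.2]⟩))
    (fun f => fun i => f ⟨i, by simpa [D] using i.2⟩) (fun f => rfl)
  have s2 := entropy_reduced hn ρ hρ.1 B (r0.trans e2)
    (fun f => (fun i => f ⟨i, i.2⟩))
    (fun f => ((fun i => f ⟨i, mA' i⟩, fun i => f ⟨i, mC' i⟩), fun i => f ⟨i, (hD' _ i.2).2.1⟩))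
    (fun f => rfl)
  have s3 := entropy_reduced hn ρ hρ.1 (A ∪ B) (r0.trans e3)
    (fun f => (fun i => f ⟨i, by simp [i.2]⟩, fun i => f ⟨i, by simp [i.2]⟩))
    (fun f => (fun i => f ⟨i, mC i⟩, fun i => f ⟨i, by simp [hD' _ i.2]⟩)) (fun f => rfl)
  have s4 := entropy_reduced hn ρ hρ.1 (B ∪ C) (r0.trans e4)
    (fun f => (fun i => f ⟨i, by simp [i.2]⟩, fun i => f ⟨i, by simp [i.2]⟩))
    (fun f => (fun i => f ⟨i, mA i⟩, fun i => f ⟨i, by simp [hD' _ i.2]⟩)) (fun f => rfl)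
  rw [s1, s2, s3, s4]
  convert key using 3
  · rfl
  · ext u v
    simp only [of_apply, τ]
    rw [Fintype.sum_prod_type]
    rfl
  · ext u v
    simp only [of_apply, τ]
    rw [Fintype.sum_prod_type]
    rfl
  · ext u v
    simp only [of_apply, τ]
    rw [Fintype.sum_prod_type]
    rfl

lemma reduced_shift {n k : ℕ} (ρ : Matrix (Fin k → Fin n) (Fin k → Fin n) ℂ)
    (S : Finset (Fin k)) (x : ℝ) :
    reduced (ρ + (x : ℂ) • 1) S = reduced ρ S +
      ((x * (Fintype.card ({ i : Fin k // i ∉ S } → Fin n) : ℝ) : ℝ) : ℂ) • 1 := by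
  let E := Equiv.piEquivPiSubtypeProd (fun i : Fin k => i ∈ S) (fun _ => Fin n)
  ext u v
  have h : ∀ w, (1 : Matrix (Fin k → Fin n) (Fin k → Fin n) ℂ) (E.symm (u, w)) (E.symm (v, w)) =
      (1 : Matrix _ _ ℂ) u v := by
    intro w
    simp only [one_apply, E.symm.injective.eq_iff, Prod.mk.injEq, and_true]
  have : reduced (ρ + (x : ℂ) • 1) S u v = ∑ w, (ρ + (x : ℂ) • 1) (E.symm (u, w)) (E.symm (v, w)) :=
    rfl
  rw [this]
  simp only [Matrix.add_apply, Matrix.smul_apply, h, Finset.sum_add_distrib, Finset.sum_const,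
    Finset.card_univ]
  congr 1
  simp only [smul_eq_mul, nsmul_eq_mul]
  push_cast
  ring

lemma ssa_reduced {n k : ℕ} (hn : 1 ≤ n)
    (ρ : Matrix (Fin k → Fin n) (Fin k → Fin n) ℂ)
    (hρ : ρ.PosSemidef) (A B C : Finset (Fin k)) (hAB : Disjoint A B) (hAC : Disjoint A C)
    (hBC : Disjoint B C) :
    entropyLn (reduced ρ (A ∪ B ∪ C)) + entropyLn (reduced ρ B) ≤
      entropyLn (reduced ρ (A ∪ B)) + entropyLn (reduced ρ (B ∪ C)) := by
  have hS : ∀ S, Filter.Tendsto (fun x : ℝ => entropyLn (reduced (ρ + (x : ℂ) • 1) S))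
      (nhdsWithin 0 (Set.Ioi 0)) (nhds (entropyLn (reduced ρ S))) := by
    intro S
    simp only [reduced_shift]
    exact entropy_shift_tendsto _ (reduced_herm ρ hρ.1 S) _
  refine le_of_tendsto_of_tendsto (b := nhdsWithin (0:ℝ) (Set.Ioi 0))
    ((hS _).add (hS _)) ((hS _).add (hS _)) ?_
  filter_upwards [self_mem_nhdsWithin] with x hx
  refine ssa_reduced_posDef hn _ ?_ A B C hAB hAC hBC
  refine PosDef.posSemidef_add hρ (PosDef.one.smul ?_)
  exact_mod_cast hx

lemma reduced_univ {n k : ℕ} (hn : 1 ≤ n) (ρ : Matrix (Fin k → Fin n) (Fin k → Fin n) ℂ)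
    (hρ : ρ.IsHermitian) : entropyLn (reduced ρ Finset.univ) = entropyLn ρ := by
  rw [entropy_reduced hn ρ hρ Finset.univ (Equiv.prodPUnit.{0, 0} (Fin k → Fin n)).symm
    (fun f i => f ⟨i, Finset.mem_univ _⟩) (fun _ => PUnit.unit.{1}) (fun f => rfl)]
  congr 1
  ext u v
  simp

lemma reduced_empty {n k : ℕ} (ρ : Matrix (Fin k → Fin n) (Fin k → Fin n) ℂ)
    (hτ : Matrix.trace ρ = 1) : entropyLn (reduced ρ ∅) = 0 := by
  rw [entropy_of_diag (reduced ρ ∅) 1 (fun _ => 1) (by simp)]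
  · simp
  · rw [dg_one]
    simp only [Matrix.mul_one, conjTranspose_one]
    ext u v
    have : u = v := by funext i; exact absurd i.2 (Finset.notMem_empty _)
    subst this
    rw [one_apply_eq, ← hτ, trace]
    let E := Equiv.piEquivPiSubtypeProd (fun i : Fin k => i ∈ (∅ : Finset (Fin k))) (fun _ => Fin n)
    rw [← E.symm.sum_comp, Fintype.sum_prod_type]
    haveI : Unique ({ i : Fin k // i ∈ (∅ : Finset (Fin k)) } → Fin n) :=
      ⟨⟨u⟩, fun v => by funext i; exact absurd i.2 (Finset.notMem_empty _)⟩
    rw [Fintype.sum_unique]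
    rw [Subsingleton.elim default u]
    rfl

lemma count_card (k s : ℕ) (i : Fin k) :
    ((Finset.powersetCard (s + 1) (Finset.univ : Finset (Fin k))).filter (fun A => i ∈ A)).card =
      (k - 1).choose s := by
  have h1 : (Finset.univ : Finset (Fin k)) = insert i (Finset.univ.erase i) := by simp
  have h2 : (Finset.powersetCard (s + 1) (Finset.univ : Finset (Fin k))).filter (fun A => i ∈ A) =
      (Finset.powersetCard s ((Finset.univ : Finset (Fin k)).erase i)).image (insert i) := by
    ext A
    simp only [Finset.mem_filter, Finset.mem_powersetCard, Finset.mem_image]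
    constructor
    · rintro ⟨⟨-, h⟩, hi⟩
      refine ⟨A.erase i, ⟨Finset.erase_subset_erase _ (Finset.subset_univ _), ?_⟩,
        Finset.insert_erase hi⟩
      rw [Finset.card_erase_of_mem hi, h]; rfl
    · rintro ⟨B, ⟨hB, hc⟩, rfl⟩
      have : i ∉ B := fun h => by simpa using hB h
      refine ⟨⟨Finset.subset_univ _, ?_⟩, Finset.mem_insert_self _ _⟩
      rw [Finset.card_insert_of_notMem this, hc]
  rw [h2, Finset.card_image_of_injOn, Finset.card_powersetCard,
    Finset.card_erase_of_mem (Finset.mem_univ _), Finset.card_univ, Fintype.card_fin]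
  intro A hA B hB hAB
  simp only [Finset.mem_coe, Finset.mem_powersetCard] at hA hB
  have a1 : i ∉ A := fun h => by simpa using hA.1 h
  have b1 : i ∉ B := fun h => by simpa using hB.1 h
  have := congrArg (fun S => Finset.erase S i) hAB
  simpa [Finset.erase_insert a1, Finset.erase_insert b1] using this

lemma han {k : ℕ} (hk : 1 ≤ k) (F : Finset (Fin k) → ℝ) (h0 : F ∅ = 0)
    (hsub : ∀ (T T' : Finset (Fin k)) (i : Fin k), T ⊆ T' → i ∉ T' →
      F (insert i T') - F T' ≤ F (insert i T) - F T) (s : ℕ) (hs : s ≤ k) :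
    ((s : ℝ) / k) * F Finset.univ ≤
      (1 / (Nat.choose k s : ℝ)) * ∑ A ∈ Finset.powersetCard s Finset.univ, F A := by
  let G : ℕ → ℝ := fun j => F (Finset.univ.filter (fun i : Fin k => i.val < j))
  let Δ : Fin k → ℝ := fun i => G (i.val + 1) - G i.val
  have hins : ∀ i : Fin k, (Finset.univ.filter (fun j : Fin k => j.val < i.val + 1)) =
      insert i (Finset.univ.filter (fun j : Fin k => j.val < i.val)) := by
    intro i; ext j
    simp only [Finset.mem_filter, Finset.mem_univ, true_and, Finset.mem_insert, Fin.ext_iff]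
    omega
  have hlow : ∀ A : Finset (Fin k), ∑ i ∈ A, Δ i ≤ F A := by
    intro A
    induction A using Finset.induction_on_max with
    | empty => simp [h0]
    | insert a A hmax ih =>
      have ha : a ∉ A := fun h => lt_irrefl _ (hmax a h)
      rw [Finset.sum_insert ha]
      have := hsub A (Finset.univ.filter (fun j : Fin k => j.val < a.val)) a
        (fun x hx => by simpa using hmax x hx) (by simp)
      rw [← hins] at this
      have h2 : Δ a ≤ F (insert a A) - F A := this
      linarith
  have htot : ∑ i, Δ i = F Finset.univ := by
    have : ∑ i : Fin k, Δ i = ∑ j ∈ Finset.range k, (G (j + 1) - G j) :=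
      Fin.sum_univ_eq_sum_range (fun j => G (j + 1) - G j) k
    rw [this, Finset.sum_range_sub]
    simp [G, h0]
  have hc : (0 : ℝ) < Nat.choose k s := by exact_mod_cast Nat.choose_pos hs
  have hk' : (0 : ℝ) < k := by exact_mod_cast hk
  have hsum : ∑ A ∈ Finset.powersetCard s (Finset.univ : Finset (Fin k)), ∑ i ∈ A, Δ i =
      (s / k * Nat.choose k s : ℝ) * F Finset.univ := by
    cases s with
    | zero => simp
    | succ s =>
      have : ∀ A : Finset (Fin k), ∑ i ∈ A, Δ i = ∑ i, if i ∈ A then Δ i else 0 := by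
        intro A; simp
      simp only [this]
      rw [Finset.sum_comm, ← htot, Finset.mul_sum]
      refine Finset.sum_congr rfl fun i _ => ?_
      rw [← Finset.sum_filter, Finset.sum_const, count_card, nsmul_eq_mul]
      congr 1
      obtain ⟨k', rfl⟩ : ∃ k', k = k' + 1 := ⟨k - 1, by omega⟩
      have := Nat.add_one_mul_choose_eq k' s
      have h' : ((k' + 1 : ℕ) : ℝ) * (k'.choose s : ℝ) = ((k' + 1).choose (s + 1) : ℝ) * ((s + 1 : ℕ) : ℝ) := by
        exact_mod_cast this
      simp only [Nat.add_sub_cancel]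
      rw [div_mul_eq_mul_div, eq_div_iff hk'.ne']
      linarith
  have hle := Finset.sum_le_sum (fun A (_ : A ∈ Finset.powersetCard s (Finset.univ : Finset (Fin k))) => hlow A)
  rw [hsum] at hle
  rw [one_div, inv_mul_eq_div, le_div_iff₀ hc]
  linarith

/-- for every density matrix `ρ` on `(ℂ^n)^{⊗k}` and `0 ≤ s ≤ k`,
`(s/k) S(ρ) ≤ (1/binom(k,s)) ∑_{|A| = s} S(ρ_A)`. -/
theorem statement17 (n k : ℕ) (hn : 1 ≤ n) (hk : 1 ≤ k) (s : ℕ) (hs : s ≤ k)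
    (ρ : Matrix (Fin k → Fin n) (Fin k → Fin n) ℂ)
    (hρ : ρ.PosSemidef) (hτ : Matrix.trace ρ = 1) :
    ((s : ℝ) / k) * entropyLn ρ ≤
      (1 / (Nat.choose k s : ℝ)) *
        ∑ A ∈ Finset.powersetCard s (Finset.univ : Finset (Fin k)),
          entropyLn (reduced ρ A) := by
  have hsub : ∀ (T T' : Finset (Fin k)) (i : Fin k), T ⊆ T' → i ∉ T' →
      entropyLn (reduced ρ (insert i T')) - entropyLn (reduced ρ T') ≤
        entropyLn (reduced ρ (insert i T)) - entropyLn (reduced ρ T) := by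
    intro T T' i hT hi
    have h := ssa_reduced hn ρ hρ (T' \ T) T {i} Finset.sdiff_disjoint
      (by simp [hi]) (by simpa using fun h => hi (hT h))
    rw [Finset.sdiff_union_of_subset hT, Finset.union_comm T' {i}, Finset.union_comm T {i},
      ← Finset.insert_eq, ← Finset.insert_eq] at h
    linarith
  have h := han hk (fun A => entropyLn (reduced ρ A)) (reduced_empty ρ hτ) hsub s hs
  simp only [reduced_univ hn ρ hρ.1] at h
  exact h
end
end
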